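/- arXiv:1105.1084 — 2 statements merged into one kernel-verified Lean document; each statement's English description precedes it below -/
import Mathlib

section
/- Let (Ω, 𝒜) be a measurable space, H a complex Hilbert space, and P a POVM on (Ω, 𝒜) acting on H such that P(B) is an orthogonal projection for every B ∈ 𝒜 (i.e. P is a normalized projection valued measure). If M₁ and M₂ are POVMs on (Ω, 𝒜) acting on H and t ∈ (0,1) is such that P(B) = t·M₁(B) + (1−t)·M₂(B) for all B ∈ 𝒜, then M₁(B) = M₂(B) = P(B) for all B ∈ 𝒜. In other words, every normalized projection valued measure is an extreme point of the convex set of all POVMs on (Ω, 𝒜) acting on H. -/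
open MeasureTheory Set

local notation "⟪" x ", " y "⟫" => @inner ℂ _ _ x y

/-- A normalized positive operator valued measure (POVM) on a measurable space `Ω`,
acting on a complex Hilbert space `H`.  Only the values on measurable sets are relevant. -/
structure POVM (Ω : Type*) [MeasurableSpace Ω] (H : Type*) [NormedAddCommGroup H]
    [InnerProductSpace ℂ H] [CompleteSpace H] where
  toFun : Set Ω → (H →L[ℂ] H)
  isPositive : ∀ B : Set Ω, MeasurableSet B → (toFun B).IsPositive
  normalized : toFun Set.univ = 1
  m_iUnion : ∀ B : ℕ → Set Ω, (∀ k, MeasurableSet (B k)) →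
    Pairwise (Function.onFun Disjoint B) → ∀ φ ψ : H,
      HasSum (fun k => ⟪φ, toFun (B k) ψ⟫) ⟪φ, toFun (⋃ k, B k) ψ⟫

/-!
A POVM is additive, so `M(Bᶜ) = 1 - M(B)`, and positivity of both sides places every `M(B)` in the
operator interval `[0, 1]`. The extreme points of that interval are exactly the projections, so a
convex decomposition of a projection valued measure is trivial on each measurable set separately.
-/

section CStarAlgebra

variable {A : Type*} [CStarAlgebra A] [PartialOrder A] [StarOrderedRing A]

theorem setOfPred_nonneg_inter_closedBall_zero_one :
    {a : A | 0 ≤ a} ∩ Metric.closedBall 0 1 = Icc 0 1 := by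
  ext a
  simp only [mem_inter_iff, mem_ofPred_eq, mem_closedBall_zero_iff, mem_Icc, and_congr_right_iff]
  exact (CStarAlgebra.norm_le_one_iff_of_nonneg a ·)

theorem isStarProjection_iff_mem_extremePoints_Icc {p : A} :
    IsStarProjection p ↔ p ∈ extremePoints ℝ (Icc (0 : A) 1) := by
  rw [isStarProjection_iff_mem_extremePoints_setOfPred_nonneg_inter_unitClosedBall,
    setOfPred_nonneg_inter_closedBall_zero_one]

theorem eq_and_eq_of_isIdempotentElem_of_mem_openSegment {a b p : A} (ha : a ∈ Icc 0 1)
    (hb : b ∈ Icc 0 1) (hp : IsIdempotentElem p) (hab : p ∈ openSegment ℝ a b) :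
    a = p ∧ b = p := by
  have hp_nonneg : 0 ≤ p := ((convex_Icc 0 1).openSegment_subset ha hb hab).1
  have hp_extreme : p ∈ extremePoints ℝ (Icc 0 1) :=
    isStarProjection_iff_mem_extremePoints_Icc.mp ⟨hp, hp_nonneg.isSelfAdjoint⟩
  exact (mem_extremePoints.mp hp_extreme).2 a ha b hb hab

end CStarAlgebra

namespace POVM

variable {Ω H : Type*} [MeasurableSpace Ω] [NormedAddCommGroup H] [InnerProductSpace ℂ H]
  [CompleteSpace H]

theorem toFun_empty (M : POVM Ω H) : M.toFun ∅ = 0 := by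
  refine ContinuousLinearMap.ext fun ψ ↦ ext_inner_left ℂ fun φ ↦ ?_
  have hsum : Summable fun _ : ℕ ↦ ⟪φ, M.toFun ∅ ψ⟫ :=
    (M.m_iUnion (fun _ ↦ ∅) (fun _ ↦ .empty) (fun _ _ _ ↦ disjoint_bot_left) φ ψ).summable
  simpa using summable_const_iff ⟪φ, M.toFun ∅ ψ⟫ |>.mp hsum

open scoped Classical in
/-- The complex measure `B ↦ ⟪φ, M(B) ψ⟫` of matrix elements of a POVM, through which the POVM
inherits the calculus of vector measures. It vanishes on non-measurable sets, as required by
`VectorMeasure`, whatever the value of `M.toFun` there. -/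
noncomputable def complexMeasure (M : POVM Ω H) (φ ψ : H) : ComplexMeasure Ω where
  measureOf' B := if MeasurableSet B then ⟪φ, M.toFun B ψ⟫ else 0
  empty' := by simp [toFun_empty]
  not_measurable' _ hB := if_neg hB
  m_iUnion' B hB hdisj := by
    simpa only [hB, MeasurableSet.iUnion hB, if_true] using M.m_iUnion B hB hdisj φ ψ

theorem complexMeasure_apply (M : POVM Ω H) (φ ψ : H) {B : Set Ω} (hB : MeasurableSet B) :
    M.complexMeasure φ ψ B = ⟪φ, M.toFun B ψ⟫ :=
  if_pos hB

theorem toFun_compl (M : POVM Ω H) {B : Set Ω} (hB : MeasurableSet B) :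
    M.toFun Bᶜ = 1 - M.toFun B := by
  refine ContinuousLinearMap.ext fun ψ ↦ ext_inner_left ℂ fun φ ↦ ?_
  calc ⟪φ, M.toFun Bᶜ ψ⟫
      = M.complexMeasure φ ψ Bᶜ := (M.complexMeasure_apply φ ψ hB.compl).symm
    _ = M.complexMeasure φ ψ univ - M.complexMeasure φ ψ B := VectorMeasure.of_compl hB
    _ = ⟪φ, ψ⟫ - ⟪φ, M.toFun B ψ⟫ := by
      rw [complexMeasure_apply _ _ _ .univ, complexMeasure_apply _ _ _ hB, M.normalized,
        one_apply_eq_self]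
    _ = ⟪φ, (1 - M.toFun B) ψ⟫ := by
      rw [sub_apply, one_apply_eq_self, inner_sub_right]

theorem toFun_nonneg (M : POVM Ω H) {B : Set Ω} (hB : MeasurableSet B) : 0 ≤ M.toFun B :=
  (ContinuousLinearMap.nonneg_iff_isPositive _).mpr (M.isPositive B hB)

theorem toFun_mem_Icc (M : POVM Ω H) {B : Set Ω} (hB : MeasurableSet B) :
    M.toFun B ∈ Icc 0 1 := by
  refine ⟨M.toFun_nonneg hB, sub_nonneg.mp ?_⟩
  rw [← M.toFun_compl hB]
  exact M.toFun_nonneg hB.compl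

end POVM

theorem stmt0_general {Ω H : Type*} [MeasurableSpace Ω] [NormedAddCommGroup H]
    [InnerProductSpace ℂ H] [CompleteSpace H] (M₁ M₂ : POVM Ω H) {B : Set Ω}
    (hB : MeasurableSet B) {p : H →L[ℂ] H} (hp : IsIdempotentElem p)
    {t : ℝ} (ht0 : 0 < t) (ht1 : t < 1)
    (hmix : p = (t : ℂ) • M₁.toFun B + ((1 - t : ℝ) : ℂ) • M₂.toFun B) :
    M₁.toFun B = p ∧ M₂.toFun B = p := by
  have hseg : p ∈ openSegment ℝ (M₁.toFun B) (M₂.toFun B) :=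
    ⟨t, 1 - t, ht0, sub_pos.mpr ht1, add_sub_cancel t 1, by
      rw [hmix, Complex.coe_smul, Complex.coe_smul]⟩
  exact eq_and_eq_of_isIdempotentElem_of_mem_openSegment (M₁.toFun_mem_Icc hB)
    (M₂.toFun_mem_Icc hB) hp hseg

/-- Every normalized projection valued measure is an extreme point of the convex set of
all POVMs on `(Ω, 𝒜)` acting on `H`. -/
theorem stmt0 {Ω H : Type*} [MeasurableSpace Ω] [NormedAddCommGroup H]
    [InnerProductSpace ℂ H] [CompleteSpace H]
    (P M₁ M₂ : POVM Ω H)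
    (hproj : ∀ B : Set Ω, MeasurableSet B →
      P.toFun B ∘L P.toFun B = P.toFun B ∧ IsSelfAdjoint (P.toFun B))
    (t : ℝ) (ht0 : 0 < t) (ht1 : t < 1)
    (hmix : ∀ B : Set Ω, MeasurableSet B →
      P.toFun B = (t : ℂ) • M₁.toFun B + ((1 - t : ℝ) : ℂ) • M₂.toFun B) :
    ∀ B : Set Ω, MeasurableSet B →
      M₁.toFun B = P.toFun B ∧ M₂.toFun B = P.toFun B := by
  intro B hB
  exact stmt0_general M₁ M₂ hB (hproj B hB).1 ht0 ht1 (hmix B hB)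
end

section
/- Let n ≥ 1 and let Λ ⊆ ℝⁿ be a Borel set of positive Lebesgue measure. Let M be a POVM on (ℝⁿ, ℬ(ℝⁿ)) acting on L²(Λ) that is covariant under U_Λ, i.e. U_Λ(q) M(B) U_Λ(q)* = M(B + q) for all q ∈ ℝⁿ and all Borel B ⊆ ℝⁿ. Then there exists a weakly measurable map ξ: Λ → ℓ²(ℕ) with ‖ξ(p)‖ = 1 for almost every p ∈ Λ such that for all φ, ψ ∈ (L¹ ∩ L²)(Λ) and all Borel B ⊆ ℝⁿ: ⟨φ, M(B)ψ⟩ = (2π)^{−n} ∫_B ∫_Λ ∫_Λ e^{i(x|p₁−p₂)} ⟨ξ(p₁), ξ(p₂)⟩ conj(φ(p₁)) ψ(p₂) dp₁ dp₂ dx. -/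
open MeasureTheory Set
open scoped ComplexConjugate

local notation "⟪" x ", " y "⟫" => @inner ℂ _ _ x y

/-- `ℓ²(ℕ)`. -/
noncomputable abbrev ell2 : Type := lp (fun _ : ℕ => ℂ) 2

/-- Covariance of a POVM `M` on `ℝⁿ` acting on `L²(Λ)` under a family of unitaries `U`:
`U(q) M(B) U(q)* = M(B + q)`. -/
def IsCovariantPos (n : ℕ) (Λ : Set (Fin n → ℝ))
    (U : (Fin n → ℝ) →
      (Lp ℂ 2 (volume.restrict Λ) ≃ₗᵢ[ℂ] Lp ℂ 2 (volume.restrict Λ)))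
    (M : POVM (Fin n → ℝ) (Lp ℂ 2 (volume.restrict Λ))) : Prop :=
  ∀ q : Fin n → ℝ, ∀ B : Set (Fin n → ℝ), MeasurableSet B →
    ∀ φ ψ : Lp ℂ 2 (volume.restrict Λ),
      ⟪(U q φ : Lp ℂ 2 (volume.restrict Λ)),
          M.toFun ((fun x => x + q) '' B) (U q ψ)⟫ = ⟪φ, M.toFun B ψ⟫

/-!
Write `|B|` for Lebesgue measure and `m_φ(B) = ⟪φ, M(B) φ⟫`. Integrating `m_{U(q)ψ}(B)` over `q`
gives `|B| ‖ψ‖²` by covariance. With the Cauchy-Schwarz inequality for the positive operator `M(B)`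
this bounds `∫ |⟪M(B) φ, U(q) ψ⟫|² dq` by `m_φ(B) |B| ‖ψ‖²`; testing against indicators `ψ` and
using Plancherel turns it into the pointwise bound `(2π)ⁿ |M(B) φ|² ≤ m_φ(B) |B|`. Pairing with `φ`
gives `m_φ(B) ≤ (2π)⁻ⁿ |B| ‖φ‖₁²`.

Let `W` be multiplication by a bounded nowhere vanishing `w ∈ L²(Λ)`. Since `‖w φ‖₁ ≤ ‖w‖₂ ‖φ‖₂`,
the operators `W* M(B) W / |B|` are uniformly bounded, so along the balls shrinking to `0` they have
a weak limit `D ≥ 0` (through an ultrafilter, which avoids selecting a subsequence). By covariance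
and Lebesgue differentiation, `x ↦ ⟪U(-x) φ, D U(-x) φ⟫` is the density of `m_{Wφ}`. Expand
`D = ∑ |h_k⟩⟨h_k|`. Then `M(ℝⁿ) = 1` and Plancherel force `(2π)ⁿ ∑ |h_k(p)|² = |w(p)|²`, so that
`ξ_k = (2π)^{n/2} conj(h_k) / w` is a field of unit vectors, and the density of `m_{Wφ}` at `x` is
`(2π)⁻ⁿ ‖∫ e^{-i(x|p)} w(p) φ(p) ξ(p) dp‖²`. Every `ψ ∈ L¹ ∩ L²` is a limit of its truncations to
`{1/(j+1) ≤ |w|}`, which have the form `w φ`; polarization gives the off-diagonal elements.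
-/

open Filter Topology FourierTransform SchwartzMap
open scoped ENNReal Real

section Plancherel

theorem eLpNorm_two_sq {α F : Type*} [MeasurableSpace α] [NormedAddCommGroup F]
    (f : α → F) (μ : Measure α) : eLpNorm f 2 μ ^ 2 = ∫⁻ x, ‖f x‖ₑ ^ 2 ∂μ := by
  simpa using eLpNorm_nnreal_pow_eq_lintegral (μ := μ) (f := f) (p := 2) two_ne_zero

theorem enorm_sq_eq_lintegral {α F : Type*} [MeasurableSpace α] [NormedAddCommGroup F]
    {μ : Measure α} (f : Lp F 2 μ) : ‖f‖ₑ ^ 2 = ∫⁻ x, ‖f x‖ₑ ^ 2 ∂μ := by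
  rw [Lp.enorm_def, eLpNorm_two_sq]

theorem lintegral_comp_smul {E : Type*} [NormedAddCommGroup E] [NormedSpace ℝ E]
    [MeasurableSpace E] [BorelSpace E] [FiniteDimensional ℝ E] (μ : Measure E)
    [μ.IsAddHaarMeasure] (f : E → ℝ≥0∞) {r : ℝ} (hr : r ≠ 0) :
    ∫⁻ x, f (r • x) ∂μ = ENNReal.ofReal |(r ^ Module.finrank ℝ E)⁻¹| * ∫⁻ x, f x ∂μ := by
  calc ∫⁻ x, f (r • x) ∂μ = ∫⁻ y, f y ∂(μ.map (r • ·)) :=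
        ((Homeomorph.smulOfNeZero r hr).measurableEmbedding.lintegral_map f).symm
    _ = ENNReal.ofReal |(r ^ Module.finrank ℝ E)⁻¹| * ∫⁻ x, f x ∂μ := by
        rw [Measure.map_addHaar_smul μ hr, lintegral_smul_measure, smul_eq_mul]

section InnerProductSpace

variable {V F : Type*} [NormedAddCommGroup V] [InnerProductSpace ℝ V] [FiniteDimensional ℝ V]
  [MeasurableSpace V] [BorelSpace V] [NormedAddCommGroup F] [InnerProductSpace ℂ F]
  [CompleteSpace F] {f : V → F}

theorem fourier_toLp_ae_eq (hf : Integrable f) (hf₂ : MemLp f 2) :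
    (𝓕 (hf₂.toLp f) : Lp F 2 (volume : Measure V)) =ᵐ[volume] 𝓕 f := by
  have hcont : Continuous (𝓕 f) := VectorFourier.fourierIntegral_continuous
    Real.continuous_fourierChar (innerSL ℝ).continuous₂ hf
  refine ae_eq_of_integral_contDiff_smul_eq ((Lp.memLp _).locallyIntegrable one_le_two)
    hcont.locallyIntegrable fun g g_diff g_supp ↦ ?_
  have supp : HasCompactSupport (Complex.ofRealCLM ∘ g) := g_supp.comp_left rfl
  have smooth : ContDiff ℝ (⊤ : ℕ∞) (Complex.ofRealCLM ∘ g) := by fun_prop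
  set G : 𝓢(V, ℂ) := supp.toSchwartzMap smooth
  have real_smul (x : V) (v : F) : g x • v = G x • v := (Complex.coe_smul (g x) v).symm
  simp only [real_smul]
  calc ∫ x, G x • (𝓕 (hf₂.toLp f) : Lp F 2 (volume : Measure V)) x
      = ∫ x, 𝓕 G x • hf₂.toLp f x := by
        simpa only [TemperedDistribution.fourier_apply, Lp.toTemperedDistribution_apply] using
          (congrArg (· G) (Lp.fourier_toTemperedDistribution_eq (hf₂.toLp f))).symm
    _ = ∫ x, 𝓕 G x • f x := by
        refine integral_congr_ae ?_
        filter_upwards [hf₂.coeFn_toLp] with x hx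
        rw [hx]
    _ = ∫ x, G x • 𝓕 f x := by
        have h := VectorFourier.integral_fourierIntegral_smul_eq_flip (L := innerₗ V)
          Real.continuous_fourierChar (innerSL ℝ).continuous₂
          (G.integrable (μ := volume)) hf
        rwa [flip_innerₗ] at h

theorem eLpNorm_fourier_eq (hf : Integrable f) (hf₂ : MemLp f 2) :
    eLpNorm (𝓕 f) 2 volume = eLpNorm f 2 volume := by
  rw [← eLpNorm_congr_ae (fourier_toLp_ae_eq hf hf₂), ← eLpNorm_congr_ae hf₂.coeFn_toLp,
    ← Lp.enorm_def, ← Lp.enorm_def, ← ofReal_norm, ← ofReal_norm, Lp.norm_fourier_eq]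

end InnerProductSpace

variable {ι : Type*} [Fintype ι]

/-- The character `p ↦ e^{i(x|p)}` of `ℝⁿ`, indexed by an arbitrary finite type. Unlike
`Real.fourierChar`, it carries no factor `2π`. -/
noncomputable def planeWave (x p : ι → ℝ) : ℂ :=
  Complex.exp (Complex.I * (x ⬝ᵥ p : ℝ))

@[simp]
theorem norm_planeWave (x p : ι → ℝ) : ‖planeWave x p‖ = 1 := by
  rw [planeWave, mul_comm, Complex.norm_exp_ofReal_mul_I]

@[fun_prop]
theorem continuous_planeWave {X : Type*} [TopologicalSpace X] {f g : X → ι → ℝ}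
    (hf : Continuous f) (hg : Continuous g) : Continuous fun z ↦ planeWave (f z) (g z) := by
  unfold planeWave
  fun_prop

theorem planeWave_sub_right (x p₁ p₂ : ι → ℝ) :
    planeWave x (p₁ - p₂) = conj (planeWave (-x) p₁) * planeWave (-x) p₂ := by
  simp only [planeWave, ← Complex.exp_conj, ← Complex.exp_add, map_mul, Complex.conj_I,
    Complex.conj_ofReal, neg_dotProduct, dotProduct_sub]
  push_cast
  ring_nf

theorem fourier_comp_ofLp_eq_integral_planeWave (g : (ι → ℝ) → ℂ) (w : EuclideanSpace ℝ ι) :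
    𝓕 (fun v : EuclideanSpace ℝ ι ↦ g v.ofLp) w =
      ∫ p, planeWave (-(2 * π) • w.ofLp) p * g p := by
  rw [← (PiLp.volume_preserving_ofLp ι).integral_comp
    (MeasurableEquiv.toLp 2 (ι → ℝ)).symm.measurableEmbedding, Real.fourier_eq']
  refine integral_congr_ae (ae_of_all _ fun v ↦ ?_)
  simp only [planeWave, smul_eq_mul, smul_dotProduct, EuclideanSpace.inner_eq_star_dotProduct,
    star_trivial, mul_comm Complex.I, neg_mul]

theorem lintegral_enorm_sq_integral_planeWave {g : (ι → ℝ) → ℂ} (hg : Integrable g)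
    (hg₂ : MemLp g 2) :
    ∫⁻ x : ι → ℝ, ‖∫ p, planeWave x p * g p‖ₑ ^ 2 =
      ENNReal.ofReal ((2 * π) ^ Fintype.card ι) * ∫⁻ p, ‖g p‖ₑ ^ 2 := by
  have preserving := PiLp.volume_preserving_ofLp ι
  have embedding : MeasurableEmbedding (WithLp.ofLp : EuclideanSpace ℝ ι → ι → ℝ) :=
    (MeasurableEquiv.toLp 2 (ι → ℝ)).symm.measurableEmbedding
  have plancherel : ∫⁻ x : ι → ℝ, ‖∫ p, planeWave (-(2 * π) • x) p * g p‖ₑ ^ 2 =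
      ∫⁻ p, ‖g p‖ₑ ^ 2 := by
    have h := eLpNorm_fourier_eq ((preserving.integrable_comp_emb embedding).2 hg)
      (hg₂.comp_measurePreserving preserving)
    rw [← preserving.lintegral_comp_emb embedding, ← preserving.lintegral_comp_emb embedding]
    simp_rw [← fourier_comp_ofLp_eq_integral_planeWave, ← eLpNorm_two_sq]
    exact congrArg (· ^ 2) h
  rw [← plancherel, lintegral_comp_smul volume (fun x ↦ ‖∫ p, planeWave x p * g p‖ₑ ^ 2)
    (neg_ne_zero.2 Real.two_pi_pos.ne'), ← mul_assoc, ← ENNReal.ofReal_mul (by positivity)]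
  simp [abs_of_pos Real.two_pi_pos, Real.pi_ne_zero]

end Plancherel

section Operators

variable {H : Type*} [NormedAddCommGroup H] [InnerProductSpace ℂ H]

theorem inner_eq_mul_inner_of_norm_add_smul_sq {H' : Type*} [NormedAddCommGroup H']
    [InnerProductSpace ℂ H'] {r : ℝ} {x y : H} {x' y' : H'}
    (h : ∀ a : ℂ, ‖x + a • y‖ ^ 2 = r * ‖x' + a • y'‖ ^ 2) : ⟪x, y⟫ = r * ⟪x', y'⟫ := by
  have expand (a : ℂ) : ((‖x + a • y‖ : ℂ)) ^ 2 = r * (‖x' + a • y'‖ : ℂ) ^ 2 := by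
    exact_mod_cast h a
  have plus := expand 1
  have minus := expand (-1)
  have plusI := expand Complex.I
  have minusI := expand (-Complex.I)
  simp only [one_smul, neg_smul, ← sub_eq_add_neg] at plus minus plusI minusI
  rw [inner_eq_sum_norm_sq_div_four, inner_eq_sum_norm_sq_div_four]
  simp only [Complex.coe_algebraMap, RCLike.I_to_complex, plus, minus, plusI, minusI]
  ring

theorem ofReal_re_inner_self (x : H) : ENNReal.ofReal ⟪x, x⟫.re = ‖x‖ₑ ^ 2 := by
  rw [inner_self_eq_norm_sq_to_K, ← ofReal_norm, ← ENNReal.ofReal_pow (norm_nonneg _)]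
  norm_cast

theorem norm_le_of_re_inner_le {A : H →L[ℂ] H} (hA : A.IsPositive) {K : ℝ} (hK : 0 ≤ K)
    (h : ∀ φ, ⟪φ, A φ⟫.re ≤ K * ‖φ‖ ^ 2) : ‖A‖ ≤ K := by
  rw [A.norm_eq_iSup_rayleighQuotient hA.isSymmetric]
  refine ciSup_le fun φ ↦ ?_
  rw [ContinuousLinearMap.rayleighQuotient, A.reApplyInnerSelf_apply, abs_of_nonneg
    (div_nonneg (hA.re_inner_nonneg_left φ) (by positivity)), hA.inner_left_eq_inner_right]
  exact div_le_of_le_mul₀ (by positivity) hK (h φ)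

open scoped ComplexOrder in
theorem isPositive_of_tendsto_inner {ι : Type*} {l : Filter ι} [l.NeBot] {A : ι → H →L[ℂ] H}
    {D : H →L[ℂ] H} (hA : ∀ i, (A i).IsPositive)
    (h : ∀ φ, Tendsto (fun i ↦ ⟪A i φ, φ⟫) l (𝓝 ⟪D φ, φ⟫)) : D.IsPositive := by
  refine (ContinuousLinearMap.isPositive_iff_complex D).2 fun φ ↦ ?_
  have nonneg : 0 ≤ ⟪D φ, φ⟫ :=
    ge_of_tendsto (h φ) (Eventually.of_forall fun i ↦ (hA i).inner_nonneg_left φ)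
  exact ⟨(Complex.eq_re_of_ofReal_le (r := 0) (by exact_mod_cast nonneg)).symm,
    (Complex.nonneg_iff.1 nonneg).1⟩

theorem countable_of_orthonormal {ι : Type*} [TopologicalSpace.SeparableSpace H] {v : ι → H}
    (hv : Orthonormal ℂ v) : Countable ι := by
  refine Pairwise.countable_of_isOpen_disjoint (s := fun i ↦ Metric.ball (v i) (1 / 2))
    (fun i j hij ↦ Metric.ball_disjoint_ball ?_) (fun i ↦ Metric.isOpen_ball)
    (fun i ↦ ⟨v i, by simp⟩)
  have dist_sq : ‖v i - v j‖ ^ 2 = 2 := by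
    rw [@norm_sub_sq ℂ, hv.1 i, hv.1 j, hv.2 hij]
    norm_num
  rw [dist_eq_norm]
  nlinarith [norm_nonneg (v i - v j)]

variable [CompleteSpace H]

theorem exists_tendsto_inner_of_norm_le {ι : Type*} (l : Ultrafilter ι) {A : ι → H →L[ℂ] H}
    {K : ℝ} (hA : ∀ i, ‖A i‖ ≤ K) :
    ∃ D : H →L[ℂ] H, ∀ φ ψ, Tendsto (fun i ↦ ⟪A i φ, ψ⟫) l (𝓝 ⟪D φ, ψ⟫) := by
  have bound (φ ψ : H) (i : ι) : ‖⟪A i φ, ψ⟫‖ ≤ K * ‖φ‖ * ‖ψ‖ :=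
    (norm_inner_le_norm _ _).trans <| by gcongr; exact (A i).le_of_opNorm_le (hA i) φ
  have limit (φ ψ : H) : ∃ z : ℂ, ‖z‖ ≤ K * ‖φ‖ * ‖ψ‖ ∧
      Tendsto (fun i ↦ ⟪A i φ, ψ⟫) l (𝓝 z) := by
    obtain ⟨z, hz, hlim⟩ := (isCompact_closedBall (0 : ℂ) (K * ‖φ‖ * ‖ψ‖)).ultrafilter_le_nhds'
      (l.map fun i ↦ ⟪A i φ, ψ⟫) (Ultrafilter.mem_map.2 <| Eventually.of_forall fun i ↦ by
        simpa using bound φ ψ i)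
    exact ⟨z, by simpa using hz, hlim⟩
  choose b b_le b_lim using limit
  let form : H →ₗ⋆[ℂ] H →ₗ[ℂ] ℂ := LinearMap.mk₂'ₛₗ (starRingEnd ℂ) (RingHom.id ℂ) b
    (fun x y z ↦ tendsto_nhds_unique (b_lim _ _) <| by
      simpa [inner_add_left] using (b_lim x z).add (b_lim y z))
    (fun c x z ↦ tendsto_nhds_unique (b_lim _ _) <| by
      simpa [inner_smul_left, mul_comm] using (b_lim x z).const_mul (conj c))
    (fun x y z ↦ tendsto_nhds_unique (b_lim _ _) <| by
      simpa [inner_add_right] using (b_lim x y).add (b_lim x z))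
    (fun c x z ↦ tendsto_nhds_unique (b_lim _ _) <| by
      simpa [inner_smul_right] using (b_lim x z).const_mul c)
  refine ⟨InnerProductSpace.continuousLinearMapOfBilin (form.mkContinuous₂ K b_le), fun φ ψ ↦ ?_⟩
  rw [InnerProductSpace.continuousLinearMapOfBilin_apply]
  exact b_lim φ ψ

theorem exists_inner_eq_inner_of_isPositive {A : H →L[ℂ] H} (hA : A.IsPositive) :
    ∃ S : H →L[ℂ] H, IsSelfAdjoint S ∧ ∀ φ ψ, ⟪φ, A ψ⟫ = ⟪S φ, S ψ⟫ := by
  have hA₀ : 0 ≤ A := A.nonneg_iff_isPositive.2 hA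
  have hS : (CFC.sqrt A).IsPositive :=
    (ContinuousLinearMap.nonneg_iff_isPositive _).1 (CFC.sqrt_nonneg A)
  refine ⟨CFC.sqrt A, hS.isSelfAdjoint, fun φ ψ ↦ ?_⟩
  rw [hS.inner_left_eq_inner_right, ← mul_apply_eq_comp,
    CFC.sqrt_mul_sqrt_self A hA₀]

theorem enorm_inner_sq_le_of_isPositive {A : H →L[ℂ] H} (hA : A.IsPositive) (φ ψ : H) :
    ‖⟪φ, A ψ⟫‖ₑ ^ 2 ≤ ENNReal.ofReal ⟪φ, A φ⟫.re * ENNReal.ofReal ⟪ψ, A ψ⟫.re := by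
  obtain ⟨S, -, hS⟩ := exists_inner_eq_inner_of_isPositive hA
  rw [hS, hS, hS, ofReal_re_inner_self, ofReal_re_inner_self, ← mul_pow]
  gcongr
  exact ENNReal.coe_le_coe.2 (nnnorm_inner_le_nnnorm _ _)

theorem lp_enorm_sq_eq_tsum {ι : Type*} {E : ι → Type*} [∀ i, NormedAddCommGroup (E i)]
    (f : lp E 2) : ‖f‖ₑ ^ 2 = ∑' i, ‖f i‖ₑ ^ 2 := by
  have h := lp.hasSum_norm (p := 2) (by norm_num) f
  simp only [ENNReal.toReal_ofNat, Real.rpow_ofNat] at h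
  simp_rw [← ofReal_norm, ← ENNReal.ofReal_pow (norm_nonneg _)]
  rw [← h.tsum_eq, ENNReal.ofReal_tsum_of_nonneg (fun i ↦ by positivity) h.summable]

theorem exists_enorm_sq_eq_tsum_enorm_inner_sq [TopologicalSpace.SeparableSpace H] :
    ∃ e : ℕ → H, ∀ v, ‖v‖ₑ ^ 2 = ∑' k, ‖⟪e k, v⟫‖ₑ ^ 2 := by
  obtain ⟨s, b, -⟩ := exists_hilbertBasis ℂ H
  obtain ⟨f, hf⟩ := (countable_of_orthonormal b.orthonormal).exists_injective_nat
  refine ⟨Function.extend f b 0, fun v ↦ ?_⟩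
  have outside (k : ℕ) (hk : k ∉ range f) : ‖⟪Function.extend f b 0 k, v⟫‖ₑ ^ 2 = 0 := by
    simp [Function.extend_apply' _ _ _ hk]
  rw [← b.repr.enorm_map, lp_enorm_sq_eq_tsum,
    ← hf.tsum_eq (Function.support_subset_iff'.2 outside)]
  simp only [hf.extend_apply, b.repr_apply_apply]

theorem exists_re_inner_eq_tsum_of_isPositive [TopologicalSpace.SeparableSpace H]
    {A : H →L[ℂ] H} (hA : A.IsPositive) :
    ∃ h : ℕ → H, ∀ φ, ENNReal.ofReal ⟪φ, A φ⟫.re = ∑' k, ‖⟪h k, φ⟫‖ₑ ^ 2 := by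
  obtain ⟨S, hS, hAS⟩ := exists_inner_eq_inner_of_isPositive hA
  obtain ⟨e, he⟩ := exists_enorm_sq_eq_tsum_enorm_inner_sq (H := H)
  refine ⟨fun k ↦ S (e k), fun φ ↦ ?_⟩
  rw [hAS, ofReal_re_inner_self, he]
  exact tsum_congr fun k ↦ congrArg (‖·‖ₑ ^ 2) (hS.isSymmetric (e k) φ).symm

end Operators

section Measure

variable {α : Type*} [MeasurableSpace α] {μ : Measure α}

theorem lintegral_measure_preimage_add_right {G : Type*} [AddGroup G] [MeasurableSpace G]
    [MeasurableAdd₂ G] (μ ν : Measure G) [SFinite μ] [SFinite ν] [μ.IsAddLeftInvariant]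
    {B : Set G} (hB : MeasurableSet B) :
    ∫⁻ q, ν ((· + q) ⁻¹' B) ∂μ = μ B * ν univ := by
  have : Measurable (B.indicator (1 : G → ℝ≥0∞)) := measurable_one.indicator hB
  calc ∫⁻ q, ν ((· + q) ⁻¹' B) ∂μ = ∫⁻ q, ∫⁻ x, B.indicator 1 (x + q) ∂ν ∂μ :=
        lintegral_congr fun q ↦ (lintegral_indicator_one (hB.preimage (by fun_prop))).symm
    _ = ∫⁻ x, ∫⁻ q, B.indicator 1 (x + q) ∂μ ∂ν := lintegral_lintegral_swap (by fun_prop)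
    _ = ∫⁻ _, μ B ∂ν := lintegral_congr fun x ↦ by
        rw [lintegral_add_left_eq_self (μ := μ) (B.indicator 1) x, lintegral_indicator_one hB]
    _ = μ B * ν univ := lintegral_const _

theorem eq_withDensity_of_tendsto_div_closedBall {E : Type*} [NormedAddCommGroup E]
    [NormedSpace ℝ E] [FiniteDimensional ℝ E] [MeasurableSpace E] [BorelSpace E]
    {μ ν : Measure E} [IsLocallyFiniteMeasure μ] [IsLocallyFiniteMeasure ν] (hν : ν ≪ μ)
    {ι : Type*} {l : Filter ι} [l.NeBot] {r : ι → ℝ} (hr : Tendsto r l (𝓝[>] 0)) {f : E → ℝ≥0∞}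
    (hf : ∀ x, Tendsto (fun i ↦ ν (Metric.closedBall x (r i)) / μ (Metric.closedBall x (r i))) l
      (𝓝 (f x))) :
    ν = μ.withDensity f := by
  rw [← Measure.withDensity_rnDeriv_eq ν μ hν]
  refine withDensity_congr_ae ?_
  filter_upwards [Besicovitch.ae_tendsto_rnDeriv ν μ] with x hx
  exact tendsto_nhds_unique (hx.comp hr) (hf x)

theorem eq_withDensity_of_tendsto [SigmaFinite μ] {ν : Measure α} {f : ℕ → α → ℝ≥0∞}
    {g : α → ℝ≥0∞} {C : ℝ≥0∞} (hC : C ≠ ∞) (hf : ∀ j, Measurable (f j)) (hfC : ∀ j x, f j x ≤ C)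
    (hfg : ∀ x, Tendsto (f · x) atTop (𝓝 (g x)))
    (hν : ∀ B, MeasurableSet B → Tendsto (fun j ↦ ∫⁻ x in B, f j x ∂μ) atTop (𝓝 (ν B))) :
    ν = μ.withDensity g := by
  have eq_of_finite {B : Set α} (hB : MeasurableSet B) (hμB : μ B ≠ ∞) :
      ν B = μ.withDensity g B := by
    rw [withDensity_apply g hB]
    refine tendsto_nhds_unique (hν B hB) ?_
    refine tendsto_lintegral_of_dominated_convergence (fun _ ↦ C) hf
      (fun j ↦ ae_of_all _ (hfC j)) ?_ (ae_of_all _ hfg)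
    simpa using ENNReal.mul_ne_top hC hμB
  refine (Measure.ext_iff_of_iUnion_eq_univ (iUnion_spanningSets μ)).2 fun k ↦ ?_
  ext B hB
  rw [Measure.restrict_apply hB, Measure.restrict_apply hB]
  exact eq_of_finite (hB.inter (measurableSet_spanningSets μ k))
    (measure_inter_lt_top_of_right_ne_top (measure_spanningSets_lt_top μ k).ne).ne

theorem exists_memLp_two_ne_zero (μ : Measure α) [SigmaFinite μ] :
    ∃ w : α → ℂ, Measurable w ∧ (∀ p, w p ≠ 0) ∧ (∀ p, ‖w p‖ ≤ 1) ∧ MemLp w 2 μ := by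
  obtain ⟨g, g_pos, g_meas, g_int⟩ := exists_pos_lintegral_lt_of_sigmaFinite μ one_ne_zero
  let w : α → ℂ := fun p ↦ (min 1 (g p) : NNReal)
  have norm_w (p : α) : ‖w p‖ = min 1 (g p) := by simp [w]
  have w_meas : Measurable w := by fun_prop
  refine ⟨w, w_meas, fun p ↦ ?_, fun p ↦ ?_, w_meas.aestronglyMeasurable, ?_⟩
  · rw [← norm_pos_iff, norm_w]
    exact lt_min one_pos (g_pos p)
  · exact (norm_w p).trans_le (min_le_left _ _)
  · have w_sq_le (p : α) : ‖w p‖ₑ ^ 2 ≤ g p := by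
      have h : ‖w p‖ₑ = (min 1 (g p) : NNReal) := by
        rw [← ofReal_norm, norm_w]
        exact ENNReal.ofReal_coe_nnreal
      rw [h, ← ENNReal.coe_pow, ENNReal.coe_le_coe, sq]
      exact (mul_le_mul' (min_le_left _ _) (min_le_right _ _)).trans_eq (one_mul _)
    refine (ENNReal.pow_lt_top_iff.1 ?_).resolve_right two_ne_zero
    rw [eLpNorm_two_sq]
    exact (lintegral_mono w_sq_le).trans_lt (g_int.trans ENNReal.one_lt_top)

theorem exists_clm_ae_eq_mul {w : α → ℂ} (hw : MemLp w ∞ μ) :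
    ∃ W : Lp ℂ 2 μ →L[ℂ] Lp ℂ 2 μ, ∀ φ, W φ =ᵐ[μ] fun p ↦ w p * φ p := by
  refine ⟨(ContinuousLinearMap.mul ℂ ℂ).holderL μ ∞ 2 2 (hw.toLp w), fun φ ↦ ?_⟩
  filter_upwards [(ContinuousLinearMap.mul ℂ ℂ).coeFn_holder (r := 2) (hw.toLp w) φ,
    hw.coeFn_toLp] with p hp hwp
  rw [← hwp]
  exact hp

theorem tendsto_toLp_indicator {F : Type*} [NormedAddCommGroup F] {p : ℝ≥0∞} [hp : Fact (1 ≤ p)]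
    (hp_top : p ≠ ∞) {f : α → F} (hf : MemLp f p μ) {E : ℕ → Set α}
    (hE : ∀ j, MeasurableSet (E j)) (h : ∀ x, ∀ᶠ j in atTop, x ∈ E j) :
    Tendsto (fun j ↦ (hf.indicator (hE j)).toLp ((E j).indicator f)) atTop (𝓝 (hf.toLp f)) := by
  have hp₀ : p ≠ 0 := (one_pos.trans_le hp.out).ne'
  have hp_pos : 0 < p.toReal := ENNReal.toReal_pos hp₀ hp_top
  rw [Lp.tendsto_Lp_iff_tendsto_eLpNorm'']
  simp_rw [eLpNorm_eq_lintegral_rpow_enorm_toReal hp₀ hp_top]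
  have power : Tendsto (fun j ↦ ∫⁻ x, ‖((E j).indicator f - f) x‖ₑ ^ p.toReal ∂μ) atTop
      (𝓝 0) := by
    rw [← lintegral_zero (μ := μ)]
    refine tendsto_lintegral_of_dominated_convergence' (fun x ↦ ‖f x‖ₑ ^ p.toReal)
      (fun j ↦ ((hf.indicator (hE j)).1.sub hf.1).enorm.pow_const _)
      (fun j ↦ ae_of_all _ fun x ↦ ?_)
      (lintegral_rpow_enorm_lt_top_of_eLpNorm_lt_top hp₀ hp_top hf.2).ne
      (ae_of_all _ fun x ↦ tendsto_const_nhds.congr' ?_)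
    · by_cases hx : x ∈ E j <;> simp [hx, hp_pos]
    · filter_upwards [h x] with j hj
      simp [hj, hp_pos]
  simpa [hp_pos, Function.comp_def] using
    (ENNReal.continuous_rpow_const (y := 1 / p.toReal)).tendsto 0 |>.comp power

end Measure

section POVM

namespace POVM

variable {Ω H : Type*} [MeasurableSpace Ω] [NormedAddCommGroup H] [InnerProductSpace ℂ H]
  [CompleteSpace H]

theorem inner_empty (M : POVM Ω H) (φ ψ : H) : ⟪φ, M.toFun ∅ ψ⟫ = 0 := by
  have h := M.m_iUnion (fun _ ↦ ∅) (fun _ ↦ .empty) (fun _ _ _ ↦ disjoint_bot_left) φ ψ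
  exact tendsto_nhds_unique tendsto_const_nhds h.summable.tendsto_atTop_zero

/-- The finite measure `B ↦ ⟪φ, M(B) φ⟫` attached to a vector `φ` by a POVM `M`. -/
noncomputable def diagMeasure (M : POVM Ω H) (φ : H) : Measure Ω :=
  Measure.ofMeasurable (fun B _ ↦ ENNReal.ofReal ⟪φ, M.toFun B φ⟫.re) (by simp [M.inner_empty])
    fun B hB hdisj ↦ by
      have h := Complex.hasSum_re (M.m_iUnion B hB hdisj φ φ)
      rw [← h.tsum_eq]
      exact ENNReal.ofReal_tsum_of_nonneg
        (fun k ↦ (M.isPositive _ (hB k)).re_inner_nonneg_right φ) h.summable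

theorem diagMeasure_apply (M : POVM Ω H) (φ : H) {B : Set Ω} (hB : MeasurableSet B) :
    M.diagMeasure φ B = ENNReal.ofReal ⟪φ, M.toFun B φ⟫.re :=
  Measure.ofMeasurable_apply B hB

theorem diagMeasure_univ (M : POVM Ω H) (φ : H) : M.diagMeasure φ univ = ‖φ‖ₑ ^ 2 := by
  rw [M.diagMeasure_apply φ .univ, M.normalized, one_apply_eq_self, ofReal_re_inner_self]

instance isFiniteMeasure_diagMeasure (M : POVM Ω H) (φ : H) :
    IsFiniteMeasure (M.diagMeasure φ) :=
  ⟨by rw [M.diagMeasure_univ]; exact ENNReal.pow_lt_top enorm_lt_top⟩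

theorem inner_self_eq_toReal_diagMeasure (M : POVM Ω H) (φ : H) {B : Set Ω}
    (hB : MeasurableSet B) : ⟪φ, M.toFun B φ⟫ = ((M.diagMeasure φ B).toReal : ℂ) := by
  have hpos := M.isPositive B hB
  rw [M.diagMeasure_apply φ hB,
    ENNReal.toReal_ofReal (show 0 ≤ ⟪φ, M.toFun B φ⟫.re from hpos.re_inner_nonneg_right φ),
    ← hpos.inner_left_eq_inner_right]
  exact ((ContinuousLinearMap.isPositive_iff_complex _).1 hpos φ).1.symm

theorem enorm_inner_sq_le (M : POVM Ω H) (φ ψ : H) {B : Set Ω} (hB : MeasurableSet B) :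
    ‖⟪φ, M.toFun B ψ⟫‖ₑ ^ 2 ≤ M.diagMeasure φ B * M.diagMeasure ψ B := by
  rw [M.diagMeasure_apply φ hB, M.diagMeasure_apply ψ hB]
  exact enorm_inner_sq_le_of_isPositive (M.isPositive B hB) φ ψ

theorem tendsto_diagMeasure_apply (M : POVM Ω H) {ι : Type*} {l : Filter ι} {φ : ι → H} {ψ : H}
    (h : Tendsto φ l (𝓝 ψ)) {B : Set Ω} (hB : MeasurableSet B) :
    Tendsto (fun i ↦ M.diagMeasure (φ i) B) l (𝓝 (M.diagMeasure ψ B)) := by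
  simp_rw [M.diagMeasure_apply _ hB]
  exact ENNReal.tendsto_ofReal <| (Complex.continuous_re.tendsto _).comp <|
    h.inner (((M.toFun B).continuous.tendsto ψ).comp h)

open scoped ComplexOrder in
theorem exists_tendsto_diagMeasure_div (M : POVM Ω H) {K : Type*} [NormedAddCommGroup K]
    [InnerProductSpace ℂ K] [CompleteSpace K] (W : K →L[ℂ] H) {μ : Measure Ω} {C : NNReal}
    (hC : ∀ φ B, MeasurableSet B → M.diagMeasure (W φ) B ≤ C * μ B * ‖φ‖ₑ ^ 2)
    {ι : Type*} (l : Ultrafilter ι) {B : ι → Set Ω} (hB : ∀ i, MeasurableSet (B i))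
    (hB_zero : ∀ i, μ (B i) ≠ 0) :
    ∃ D : K →L[ℂ] K, D.IsPositive ∧ ∀ φ, Tendsto
      (fun i ↦ M.diagMeasure (W φ) (B i) / μ (B i)) l (𝓝 (ENNReal.ofReal ⟪φ, D φ⟫.re)) := by
  let A (i : ι) : K →L[ℂ] K :=
    ((μ (B i)).toReal⁻¹ : ℂ) • (W.adjoint ∘L M.toFun (B i) ∘L W)
  have A_pos (i : ι) : (A i).IsPositive :=
    ((M.isPositive _ (hB i)).adjoint_conj W).smul_of_nonneg (by positivity)
  have ofReal_inner_A (i : ι) (φ : K) :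
      ENNReal.ofReal ⟪φ, A i φ⟫.re = M.diagMeasure (W φ) (B i) / μ (B i) := by
    have inner_A : ⟪φ, A i φ⟫.re = (μ (B i)).toReal⁻¹ * ⟪W φ, M.toFun (B i) (W φ)⟫.re := by
      simp [A, ContinuousLinearMap.adjoint_inner_right, -Complex.ofReal_inv]
    rw [inner_A, ENNReal.ofReal_mul (by positivity), ← M.diagMeasure_apply _ (hB i),
      ← ENNReal.toReal_inv, ENNReal.ofReal_toReal (ENNReal.inv_ne_top.2 (hB_zero i)), mul_comm,
      ENNReal.div_eq_inv_mul, mul_comm]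
  have norm_A_le (i : ι) : ‖A i‖ ≤ C := by
    refine norm_le_of_re_inner_le (A_pos i) C.2 fun φ ↦ ?_
    rw [← ENNReal.ofReal_le_ofReal_iff (by positivity), ofReal_inner_A]
    calc M.diagMeasure (W φ) (B i) / μ (B i) ≤ C * ‖φ‖ₑ ^ 2 := by
          refine ENNReal.div_le_of_le_mul ((hC φ _ (hB i)).trans_eq ?_)
          ring
      _ = ENNReal.ofReal (C * ‖φ‖ ^ 2) := by
          rw [ENNReal.ofReal_mul C.coe_nonneg, ENNReal.ofReal_pow (norm_nonneg φ), ofReal_norm,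
            ENNReal.ofReal_coe_nnreal]
  obtain ⟨D, hD⟩ := exists_tendsto_inner_of_norm_le l norm_A_le
  have D_pos : D.IsPositive := isPositive_of_tendsto_inner A_pos fun φ ↦ hD φ φ
  refine ⟨D, D_pos, fun φ ↦ ?_⟩
  simp_rw [← ofReal_inner_A, ← (A_pos _).inner_left_eq_inner_right,
    ← D_pos.inner_left_eq_inner_right]
  exact ENNReal.tendsto_ofReal ((Complex.continuous_re.tendsto _).comp (hD φ φ))

end POVM

end POVM

section Modulation

theorem enorm_sq_indicatorConstLp {α : Type*} [MeasurableSpace α] {μ : Measure α} {S : Set α}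
    (hS : MeasurableSet S) (hμS : μ S ≠ ∞) :
    ‖indicatorConstLp 2 hS hμS (1 : ℂ)‖ₑ ^ 2 = μ S := by
  rw [Lp.enorm_def, eLpNorm_congr_ae indicatorConstLp_coeFn, eLpNorm_two_sq,
    ← lintegral_indicator_one hS]
  refine lintegral_congr fun p ↦ ?_
  by_cases hp : p ∈ S <;> simp [hp]

theorem enorm_inner_sq_le_of_ae_enorm_sq_le {α : Type*} [MeasurableSpace α] {μ : Measure α}
    (φ : Lp ℂ 2 μ) {ψ : Lp ℂ 2 μ} {K : ℝ≥0∞} (h : ∀ᵐ p ∂μ, ‖ψ p‖ₑ ^ 2 ≤ K) :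
    ‖⟪φ, ψ⟫‖ₑ ^ 2 ≤ K * (∫⁻ p, ‖φ p‖ₑ ∂μ) ^ 2 := by
  have sqrt_sq : (K ^ (2⁻¹ : ℝ)) ^ 2 = K := by
    rw [← ENNReal.rpow_mul_natCast]
    norm_num
  have norm_inner_le : ‖⟪φ, ψ⟫‖ₑ ≤ K ^ (2⁻¹ : ℝ) * ∫⁻ p, ‖φ p‖ₑ ∂μ := by
    rw [L2.inner_def, ← lintegral_const_mul _ (Lp.stronglyMeasurable φ).measurable.enorm]
    refine (enorm_integral_le_lintegral_enorm _).trans (lintegral_mono_ae ?_)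
    filter_upwards [h] with p hp
    rw [← sqrt_sq, ENNReal.pow_le_pow_left_iff two_ne_zero] at hp
    rw [RCLike.inner_apply, enorm_mul, RCLike.enorm_conj]
    gcongr
  calc ‖⟪φ, ψ⟫‖ₑ ^ 2 ≤ (K ^ (2⁻¹ : ℝ) * ∫⁻ p, ‖φ p‖ₑ ∂μ) ^ 2 := by gcongr
    _ = K * (∫⁻ p, ‖φ p‖ₑ ∂μ) ^ 2 := by rw [mul_pow, sqrt_sq]

variable {ι : Type*} [Fintype ι]

/-- Each `U q` multiplies by the character `p ↦ e^{i(q|p)}`. For `μ` the Lebesgue measure on `Λ`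
this says that `U` is the representation `U_Λ`. -/
def IsModulation (μ : Measure (ι → ℝ)) (U : (ι → ℝ) → Lp ℂ 2 μ ≃ₗᵢ[ℂ] Lp ℂ 2 μ) : Prop :=
  ∀ q φ, U q φ =ᵐ[μ] fun p ↦ planeWave q p * φ p

namespace IsModulation

section Measure

variable {μ : Measure (ι → ℝ)} {U : (ι → ℝ) → Lp ℂ 2 μ ≃ₗᵢ[ℂ] Lp ℂ 2 μ}

theorem inner_eq (hU : IsModulation μ U) (φ ψ : Lp ℂ 2 μ) (q : ι → ℝ) :
    ⟪φ, U q ψ⟫ = ∫ p, planeWave q p * ⟪φ p, ψ p⟫ ∂μ := by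
  rw [L2.inner_def]
  refine integral_congr_ae ?_
  filter_upwards [hU q ψ] with p hp
  rw [hp, RCLike.inner_apply, RCLike.inner_apply, mul_assoc]

theorem continuous_inner (hU : IsModulation μ U) (φ ψ : Lp ℂ 2 μ) :
    Continuous fun q ↦ ⟪φ, U q ψ⟫ := by
  simp_rw [hU.inner_eq]
  have integrable := L2.integrable_inner (𝕜 := ℂ) φ ψ
  refine continuous_of_dominated (bound := fun p ↦ ‖⟪φ p, ψ p⟫‖) (fun q ↦ ?_)
    (fun q ↦ ae_of_all _ fun p ↦ ?_) integrable.norm (ae_of_all _ fun p ↦ by fun_prop)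
  · exact (Continuous.aestronglyMeasurable (by fun_prop)).mul integrable.1
  · simp

theorem map_apply_of_ae_eq_mul (hU : IsModulation μ U) {W : Lp ℂ 2 μ → Lp ℂ 2 μ}
    {w : (ι → ℝ) → ℂ} (hW : ∀ φ, W φ =ᵐ[μ] fun p ↦ w p * φ p) (q : ι → ℝ) (φ : Lp ℂ 2 μ) :
    W (U q φ) = U q (W φ) := by
  refine Lp.ext ?_
  filter_upwards [hW (U q φ), hU q (W φ), hW φ, hU q φ] with p hWU hUW hWφ hUφ
  rw [hWU, hUW, hWφ, hUφ, mul_left_comm]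

end Measure

variable {Λ : Set (ι → ℝ)}
  {U : (ι → ℝ) → Lp ℂ 2 (volume.restrict Λ) ≃ₗᵢ[ℂ] Lp ℂ 2 (volume.restrict Λ)}

theorem lintegral_enorm_sq_inner_indicatorConstLp (hU : IsModulation (volume.restrict Λ) U)
    (hΛ : MeasurableSet Λ) (φ : Lp ℂ 2 (volume.restrict Λ)) {S : Set (ι → ℝ)}
    (hS : MeasurableSet S) (hS_top : volume.restrict Λ S ≠ ∞) :
    ∫⁻ q, ‖⟪φ, U q (indicatorConstLp 2 hS hS_top 1)⟫‖ₑ ^ 2 =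
      ENNReal.ofReal ((2 * π) ^ Fintype.card ι) *
        ∫⁻ p in S, ‖φ p‖ₑ ^ 2 ∂(volume.restrict Λ) := by
  have hSΛ : MeasurableSet (S ∩ Λ) := hS.inter hΛ
  have : IsFiniteMeasure (volume.restrict (S ∩ Λ)) :=
    ⟨by rwa [Measure.restrict_apply_univ, ← Measure.restrict_apply hS, lt_top_iff_ne_top]⟩
  have memLp : MemLp (fun p ↦ conj (φ p)) 2 (volume.restrict (S ∩ Λ)) := by
    rw [← Measure.restrict_restrict hS]
    exact (Lp.memLp φ).star.restrict S
  have inner_eq (q : ι → ℝ) : ⟪φ, U q (indicatorConstLp 2 hS hS_top 1)⟫ =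
      ∫ p, planeWave q p * (S ∩ Λ).indicator (fun p ↦ conj (φ p)) p := by
    calc ⟪φ, U q (indicatorConstLp 2 hS hS_top 1)⟫
        = ∫ p, S.indicator (fun p ↦ planeWave q p * conj (φ p)) p ∂(volume.restrict Λ) := by
          rw [hU.inner_eq]
          refine integral_congr_ae ?_
          filter_upwards [indicatorConstLp_coeFn (hs := hS) (hμs := hS_top) (c := (1 : ℂ))]
            with p hp
          rw [hp]
          by_cases hpS : p ∈ S <;> simp [hpS]
      _ = ∫ p, planeWave q p * (S ∩ Λ).indicator (fun p ↦ conj (φ p)) p := by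
          rw [integral_indicator hS, Measure.restrict_restrict hS, ← integral_indicator hSΛ]
          simp_rw [indicator_mul_right]
  simp_rw [inner_eq]
  rw [lintegral_enorm_sq_integral_planeWave ((integrable_indicator_iff hSΛ).2
    (memLp.integrable one_le_two)) ((memLp_indicator_iff_restrict hSΛ).2 memLp),
    Measure.restrict_restrict hS, ← lintegral_indicator hSΛ]
  congr 1
  refine lintegral_congr fun p ↦ ?_
  by_cases hp : p ∈ S ∩ Λ <;> simp [hp]

theorem ae_mul_enorm_sq_le (hU : IsModulation (volume.restrict Λ) U) (hΛ : MeasurableSet Λ)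
    {φ : Lp ℂ 2 (volume.restrict Λ)} {K : ℝ≥0∞}
    (hK : ∀ ψ, ∫⁻ q, ‖⟪φ, U q ψ⟫‖ₑ ^ 2 ≤ K * ‖ψ‖ₑ ^ 2) :
    ∀ᵐ p ∂(volume.restrict Λ),
      ENNReal.ofReal ((2 * π) ^ Fintype.card ι) * ‖φ p‖ₑ ^ 2 ≤ K := by
  have meas : Measurable fun p ↦ ‖φ p‖ₑ ^ 2 :=
    (Lp.stronglyMeasurable φ).measurable.enorm.pow_const 2
  refine ae_le_of_forall_setLIntegral_le_of_sigmaFinite (meas.const_mul _) fun S hS hS_top ↦ ?_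
  rw [lintegral_const_mul _ meas, setLIntegral_const,
    ← hU.lintegral_enorm_sq_inner_indicatorConstLp hΛ φ hS hS_top.ne]
  exact (hK _).trans_eq (by rw [enorm_sq_indicatorConstLp])

theorem ae_mul_tsum_enorm_sq_eq (hU : IsModulation (volume.restrict Λ) U) (hΛ : MeasurableSet Λ)
    {w : (ι → ℝ) → ℂ} (hw : Measurable w)
    {W : Lp ℂ 2 (volume.restrict Λ) → Lp ℂ 2 (volume.restrict Λ)}
    (hW : ∀ φ, W φ =ᵐ[volume.restrict Λ] fun p ↦ w p * φ p)
    {h : ℕ → Lp ℂ 2 (volume.restrict Λ)}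
    (hh : ∀ φ, ‖W φ‖ₑ ^ 2 = ∫⁻ x, ∑' k, ‖⟪h k, U (-x) φ⟫‖ₑ ^ 2) :
    ∀ᵐ p ∂(volume.restrict Λ),
      ENNReal.ofReal ((2 * π) ^ Fintype.card ι) * ∑' k, ‖h k p‖ₑ ^ 2 = ‖w p‖ₑ ^ 2 := by
  have meas_h (k : ℕ) : Measurable fun p ↦ ‖h k p‖ₑ ^ 2 :=
    (Lp.stronglyMeasurable (h k)).measurable.enorm.pow_const 2
  have meas_inner (k : ℕ) (φ) : Measurable fun x ↦ ‖⟪h k, U (-x) φ⟫‖ₑ ^ 2 :=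
    ((hU.continuous_inner (h k) φ).comp continuous_neg).measurable.enorm.pow_const 2
  refine ae_eq_of_forall_setLIntegral_eq_of_sigmaFinite
    ((Measurable.tsum meas_h).const_mul _) (hw.enorm.pow_const 2) fun S hS hS_top ↦ ?_
  set e := indicatorConstLp (μ := volume.restrict Λ) 2 hS hS_top.ne (1 : ℂ)
  calc ∫⁻ p in S, ENNReal.ofReal ((2 * π) ^ Fintype.card ι) * ∑' k, ‖h k p‖ₑ ^ 2
        ∂(volume.restrict Λ)
      = ∑' k, ENNReal.ofReal ((2 * π) ^ Fintype.card ι) *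
          ∫⁻ p in S, ‖h k p‖ₑ ^ 2 ∂(volume.restrict Λ) := by
        rw [lintegral_const_mul _ (Measurable.tsum meas_h),
          lintegral_tsum fun k ↦ (meas_h k).aemeasurable, ENNReal.tsum_mul_left]
    _ = ∑' k, ∫⁻ x, ‖⟪h k, U (-x) e⟫‖ₑ ^ 2 := tsum_congr fun k ↦ by
        rw [← hU.lintegral_enorm_sq_inner_indicatorConstLp hΛ (h k) hS hS_top.ne]
        exact (lintegral_neg_eq_self fun x ↦ ‖⟪h k, U x e⟫‖ₑ ^ 2).symm
    _ = ‖W e‖ₑ ^ 2 := by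
        rw [hh, lintegral_tsum fun k ↦ (meas_inner k e).aemeasurable]
    _ = ∫⁻ p in S, ‖w p‖ₑ ^ 2 ∂(volume.restrict Λ) := by
        rw [enorm_sq_eq_lintegral, ← lintegral_indicator hS]
        refine lintegral_congr_ae ?_
        filter_upwards [hW e,
          indicatorConstLp_coeFn (hs := hS) (hμs := hS_top.ne) (c := (1 : ℂ))] with p hWp hp
        rw [hWp, hp]
        by_cases hpS : p ∈ S <;> simp [hpS]

end IsModulation

end Modulation

section Covariance

namespace POVM

variable {n : ℕ} {Λ : Set (Fin n → ℝ)}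
  {U : (Fin n → ℝ) → Lp ℂ 2 (volume.restrict Λ) ≃ₗᵢ[ℂ] Lp ℂ 2 (volume.restrict Λ)}
  {M : POVM (Fin n → ℝ) (Lp ℂ 2 (volume.restrict Λ))}

theorem diagMeasure_map_apply (hM : IsCovariantPos n Λ U M) (q : Fin n → ℝ)
    (φ : Lp ℂ 2 (volume.restrict Λ)) {B : Set (Fin n → ℝ)} (hB : MeasurableSet B) :
    M.diagMeasure (U q φ) B = M.diagMeasure φ ((· + q) ⁻¹' B) := by
  have hB' : MeasurableSet ((· + q) ⁻¹' B) := hB.preimage (measurable_add_const q)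
  rw [M.diagMeasure_apply _ hB, M.diagMeasure_apply _ hB', ← hM q _ hB' φ φ,
    image_preimage_eq B (add_right_surjective q)]

theorem lintegral_diagMeasure_map (hM : IsCovariantPos n Λ U M)
    (φ : Lp ℂ 2 (volume.restrict Λ)) {B : Set (Fin n → ℝ)} (hB : MeasurableSet B) :
    ∫⁻ q, M.diagMeasure (U q φ) B = volume B * ‖φ‖ₑ ^ 2 := by
  simp_rw [diagMeasure_map_apply hM _ φ hB]
  rw [lintegral_measure_preimage_add_right _ _ hB, M.diagMeasure_univ]

theorem diagMeasure_le (hM : IsCovariantPos n Λ U M) (hU : IsModulation (volume.restrict Λ) U)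
    (hΛ : MeasurableSet Λ) (φ : Lp ℂ 2 (volume.restrict Λ)) {B : Set (Fin n → ℝ)}
    (hB : MeasurableSet B) :
    M.diagMeasure φ B ≤
      (ENNReal.ofReal ((2 * π) ^ n))⁻¹ * volume B * (∫⁻ p, ‖φ p‖ₑ ∂(volume.restrict Λ)) ^ 2 := by
  set c := ENNReal.ofReal ((2 * π) ^ n) with hc
  have c_ne_zero : c ≠ 0 := (ENNReal.ofReal_pos.2 (by positivity)).ne'
  have c_ne_top : c ≠ ∞ := ENNReal.ofReal_ne_top
  set a := M.diagMeasure φ B with ha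
  have a_ne_top : a ≠ ∞ := measure_ne_top _ _
  have orbit (ψ) : ∫⁻ q, ‖⟪M.toFun B φ, U q ψ⟫‖ₑ ^ 2 ≤ a * volume B * ‖ψ‖ₑ ^ 2 := by
    rw [mul_assoc, ← lintegral_diagMeasure_map hM ψ hB, ← lintegral_const_mul' _ _ a_ne_top]
    refine lintegral_mono fun q ↦ ?_
    rw [(M.isPositive B hB).inner_left_eq_inner_right]
    exact M.enorm_inner_sq_le φ (U q ψ) hB
  have bound : ∀ᵐ p ∂(volume.restrict Λ), ‖M.toFun B φ p‖ₑ ^ 2 ≤ c⁻¹ * (a * volume B) := by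
    filter_upwards [hU.ae_mul_enorm_sq_le hΛ orbit] with p hp
    rw [Fintype.card_fin, ← hc] at hp
    rwa [← ENNReal.div_eq_inv_mul,
      ENNReal.le_div_iff_mul_le (.inl c_ne_zero) (.inl c_ne_top), mul_comm]
  have sq_le := enorm_inner_sq_le_of_ae_enorm_sq_le φ bound
  have enorm_inner : ‖⟪φ, M.toFun B φ⟫‖ₑ = a := by
    rw [M.inner_self_eq_toReal_diagMeasure φ hB, ← ha, ← ofReal_norm, Complex.norm_real,
      Real.norm_of_nonneg ENNReal.toReal_nonneg, ENNReal.ofReal_toReal a_ne_top]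
  rw [enorm_inner, sq] at sq_le
  rcases eq_or_ne a 0 with a_zero | a_ne_zero
  · exact a_zero.trans_le zero_le
  · rw [← ENNReal.mul_le_mul_iff_right a_ne_zero a_ne_top]
    exact sq_le.trans_eq (by ring)

theorem diagMeasure_le_of_ae_eq_mul (hM : IsCovariantPos n Λ U M)
    (hU : IsModulation (volume.restrict Λ) U) (hΛ : MeasurableSet Λ) {w : (Fin n → ℝ) → ℂ}
    (hw : AEStronglyMeasurable w (volume.restrict Λ)) {φ ψ : Lp ℂ 2 (volume.restrict Λ)}
    (hψ : ψ =ᵐ[volume.restrict Λ] fun p ↦ w p * φ p) {B : Set (Fin n → ℝ)}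
    (hB : MeasurableSet B) :
    M.diagMeasure ψ B ≤ (ENNReal.ofReal ((2 * π) ^ n))⁻¹ *
      eLpNorm w 2 (volume.restrict Λ) ^ 2 * volume B * ‖φ‖ₑ ^ 2 := by
  have integral_le : ∫⁻ p, ‖ψ p‖ₑ ∂(volume.restrict Λ) ≤
      eLpNorm w 2 (volume.restrict Λ) * ‖φ‖ₑ := by
    rw [← eLpNorm_one_eq_lintegral_enorm, eLpNorm_congr_ae hψ, Lp.enorm_def]
    exact eLpNorm_smul_le_mul_eLpNorm (p := 2) (q := 2) (r := 1) (φ := w)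
      (Lp.aestronglyMeasurable φ) hw
  calc M.diagMeasure ψ B
      ≤ (ENNReal.ofReal ((2 * π) ^ n))⁻¹ * volume B *
        (eLpNorm w 2 (volume.restrict Λ) * ‖φ‖ₑ) ^ 2 :=
        (diagMeasure_le hM hU hΛ ψ hB).trans (by gcongr)
    _ = _ := by ring

theorem exists_diagMeasure_eq_withDensity (hM : IsCovariantPos n Λ U M)
    (hU : IsModulation (volume.restrict Λ) U) (hΛ : MeasurableSet Λ) {w : (Fin n → ℝ) → ℂ}
    (hw : MemLp w 2 (volume.restrict Λ))
    {W : Lp ℂ 2 (volume.restrict Λ) →L[ℂ] Lp ℂ 2 (volume.restrict Λ)}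
    (hW : ∀ φ, W φ =ᵐ[volume.restrict Λ] fun p ↦ w p * φ p) :
    ∃ h : ℕ → Lp ℂ 2 (volume.restrict Λ), ∀ φ,
      M.diagMeasure (W φ) = volume.withDensity fun x ↦ ∑' k, ‖⟪h k, U (-x) φ⟫‖ₑ ^ 2 := by
  set C := (ENNReal.ofReal ((2 * π) ^ n))⁻¹ * eLpNorm w 2 (volume.restrict Λ) ^ 2
  have c_ne_zero : ENNReal.ofReal ((2 * π) ^ n) ≠ 0 := (ENNReal.ofReal_pos.2 (by positivity)).ne'
  have C_ne_top : C ≠ ∞ :=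
    ENNReal.mul_ne_top (ENNReal.inv_ne_top.2 c_ne_zero) (ENNReal.pow_ne_top hw.2.ne)
  have diag_le (φ B) (hB : MeasurableSet B) :
      M.diagMeasure (W φ) B ≤ C.toNNReal * volume B * ‖φ‖ₑ ^ 2 := by
    rw [ENNReal.coe_toNNReal C_ne_top]
    exact diagMeasure_le_of_ae_eq_mul hM hU hΛ hw.1 (hW φ) hB
  let r (m : ℕ) : ℝ := 1 / ((m : ℝ) + 1)
  have r_pos (m : ℕ) : 0 < r m := Nat.one_div_pos_of_nat
  have tendsto_r : Tendsto r (hyperfilter ℕ) (𝓝[>] 0) :=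
    (tendsto_nhdsWithin_iff.2 ⟨tendsto_one_div_add_atTop_nhds_zero_nat, .of_forall r_pos⟩).mono_left
      Nat.hyperfilter_le_atTop
  obtain ⟨D, D_pos, hD⟩ := M.exists_tendsto_diagMeasure_div W diag_le (hyperfilter ℕ)
    (B := fun m ↦ Metric.closedBall 0 (r m)) (fun m ↦ Metric.isClosed_closedBall.measurableSet)
    fun m ↦ (Metric.measure_closedBall_pos _ _ (r_pos m)).ne'
  have : Fact ((2 : ℝ≥0∞) ≠ ∞) := ⟨ENNReal.ofNat_ne_top⟩
  obtain ⟨h, hh⟩ := exists_re_inner_eq_tsum_of_isPositive D_pos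
  refine ⟨h, fun φ ↦ eq_withDensity_of_tendsto_div_closedBall ?_ tendsto_r fun x ↦ ?_⟩
  · refine Measure.AbsolutelyContinuous.mk fun B hB hB_zero ↦ ?_
    simpa [hB_zero] using diag_le φ B hB
  · have preimage (m : ℕ) :
        (· + -x) ⁻¹' Metric.closedBall 0 (r m) = Metric.closedBall x (r m) := by
      ext y
      simp [dist_eq_norm, sub_eq_add_neg]
    rw [← hh]
    refine (hD (U (-x) φ)).congr fun m ↦ ?_
    rw [hU.map_apply_of_ae_eq_mul hW, diagMeasure_map_apply hM _ _
      Metric.isClosed_closedBall.measurableSet,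
      ← measure_preimage_add_right volume (-x) (Metric.closedBall 0 (r m)), preimage]

end POVM

end Covariance

section Ell2

variable {α : Type*} [MeasurableSpace α] {μ : Measure α}

theorem stronglyMeasurable_of_forall_apply {ξ : α → ell2}
    (hξ : ∀ k, Measurable fun p ↦ ξ p k) : StronglyMeasurable ξ := by
  have continuous_single (k : ℕ) : Continuous fun z : ℂ ↦ (lp.single 2 k z : ell2) :=
    AddMonoidHomClass.continuous_of_bound (lp.singleAddMonoidHom (E := fun _ : ℕ ↦ ℂ) 2 k) 1
      fun z ↦ by simp
  refine stronglyMeasurable_of_tendsto atTop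
    (f := fun N p ↦ ∑ k ∈ Finset.range N, lp.single 2 k (ξ p k)) (fun N ↦ ?_)
    (tendsto_pi_nhds.2 fun p ↦ (lp.hasSum_single (by norm_num) (ξ p)).tendsto_sum_nat)
  exact Finset.stronglyMeasurable_fun_sum _ fun k _ ↦
    (continuous_single k).comp_stronglyMeasurable (hξ k).stronglyMeasurable

theorem exists_ell2_of_tsum_enorm_sq_eq_one {f : ℕ → α → ℂ} (hf : ∀ k, Measurable (f k))
    (h : ∀ᵐ p ∂μ, ∑' k, ‖f k p‖ₑ ^ 2 = 1) :
    ∃ ξ : α → ell2, StronglyMeasurable ξ ∧ ∀ᵐ p ∂μ, ‖ξ p‖ = 1 ∧ ∀ k, ξ p k = f k p := by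
  classical
  let G : Set α := {p | ∑' k, ‖f k p‖ₑ ^ 2 = 1}
  have hG : MeasurableSet G := measurableSet_eq_fun
    (Measurable.tsum fun k ↦ (hf k).enorm.pow_const 2) measurable_const
  have mem (p : α) : Memℓp (fun k ↦ G.indicator (f k) p) 2 := by
    have ne_top : ∑' k, ‖G.indicator (f k) p‖ₑ ^ 2 ≠ ∞ := by
      by_cases hp : p ∈ G
      · simp only [indicator_of_mem hp, show ∑' k, ‖f k p‖ₑ ^ 2 = 1 from hp]
        exact ENNReal.one_ne_top
      · simp [hp]
    refine (memℓp_gen_iff (by norm_num)).2 ((ENNReal.summable_toReal ne_top).congr fun k ↦ ?_)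
    simp
  let ξ (p : α) : ell2 := ⟨fun k ↦ G.indicator (f k) p, mem p⟩
  refine ⟨ξ, stronglyMeasurable_of_forall_apply fun k ↦ (hf k).indicator hG, ?_⟩
  filter_upwards [h] with p hp
  have apply_eq (k : ℕ) : ξ p k = f k p := indicator_of_mem (show p ∈ G from hp) (f k)
  have enorm_sq : ‖ξ p‖ₑ ^ 2 = 1 := by
    rw [lp_enorm_sq_eq_tsum, ← hp]
    simp_rw [apply_eq]
  refine ⟨?_, apply_eq⟩
  rw [← ofReal_norm, ← ENNReal.ofReal_pow (norm_nonneg _), ENNReal.ofReal_eq_one] at enorm_sq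
  exact (pow_eq_one_iff_of_nonneg (norm_nonneg _) two_ne_zero).1 enorm_sq

theorem enorm_ofReal_sqrt_sq {r : ℝ} (hr : 0 ≤ r) : ‖(√r : ℂ)‖ₑ ^ 2 = ENNReal.ofReal r := by
  rw [← ofReal_norm, ← ENNReal.ofReal_pow (norm_nonneg _), Complex.norm_real, Real.norm_eq_abs,
    sq_abs, Real.sq_sqrt hr]

theorem exists_ell2_of_mul_tsum_enorm_sq_eq {r : ℝ} (hr : 0 ≤ r) {w : α → ℂ} (hw : Measurable w)
    (hw_ne : ∀ p, w p ≠ 0) {h : ℕ → α → ℂ} (hh : ∀ k, Measurable (h k))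
    (h_sum : ∀ᵐ p ∂μ, ENNReal.ofReal r * ∑' k, ‖h k p‖ₑ ^ 2 = ‖w p‖ₑ ^ 2) :
    ∃ ξ : α → ell2, StronglyMeasurable ξ ∧
      ∀ᵐ p ∂μ, ‖ξ p‖ = 1 ∧ ∀ k, ξ p k = √r * conj (h k p) / w p := by
  refine exists_ell2_of_tsum_enorm_sq_eq_one (fun k ↦ by fun_prop) ?_
  filter_upwards [h_sum] with p hp
  have term (k : ℕ) : ‖√r * conj (h k p) / w p‖ₑ ^ 2 =
      ENNReal.ofReal r * ‖h k p‖ₑ ^ 2 * (‖w p‖ₑ ^ 2)⁻¹ := by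
    rw [div_eq_mul_inv, enorm_mul, enorm_mul, enorm_inv (hw_ne p), mul_pow, mul_pow,
      ENNReal.inv_pow, enorm_ofReal_sqrt_sq hr, RCLike.enorm_conj]
  simp_rw [term]
  rw [ENNReal.tsum_mul_right, ENNReal.tsum_mul_left, hp,
    ENNReal.mul_inv_cancel (by simpa using hw_ne p) (by simp)]

end Ell2

section PlaneWaveTransform

variable {ι F : Type*} [Fintype ι] [NormedAddCommGroup F] [NormedSpace ℂ F]

/-- The Fourier transform `x ↦ ∫ e^{-i(x|p)} g(p) dμ(p)` of a vector-valued function `g`,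
without a factor `2π` in the exponent. -/
noncomputable def planeWaveTransform (μ : Measure (ι → ℝ)) (g : (ι → ℝ) → F) : (ι → ℝ) → F :=
  VectorFourier.fourierIntegral Real.probChar μ (dotProductBilin ℝ ℝ) g

variable {μ : Measure (ι → ℝ)} {f g : (ι → ℝ) → F}

theorem probChar_neg_dotProductBilin_smul (x p : ι → ℝ) (v : F) :
    Real.probChar (-dotProductBilin ℝ ℝ p x) • v = planeWave (-x) p • v := by
  rw [Circle.smul_def, Real.probChar_apply, planeWave, neg_dotProduct, dotProduct_comm x p,
    mul_comm]
  rfl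

theorem continuous_dotProductBilin :
    Continuous fun z : (ι → ℝ) × (ι → ℝ) ↦ dotProductBilin ℝ ℝ z.1 z.2 :=
  continuous_fst.dotProduct continuous_snd

theorem planeWaveTransform_apply (μ : Measure (ι → ℝ)) (g : (ι → ℝ) → F) (x : ι → ℝ) :
    planeWaveTransform μ g x = ∫ p, planeWave (-x) p • g p ∂μ :=
  integral_congr_ae (ae_of_all _ fun p ↦ probChar_neg_dotProductBilin_smul x p (g p))

theorem integrable_planeWave_smul (hg : Integrable g μ) (x : ι → ℝ) :
    Integrable (fun p ↦ planeWave (-x) p • g p) μ := by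
  simp_rw [← probChar_neg_dotProductBilin_smul]
  exact (VectorFourier.fourierIntegral_convergent_iff Real.continuous_probChar
    continuous_dotProductBilin x).2 hg

theorem continuous_planeWaveTransform (hg : Integrable g μ) :
    Continuous (planeWaveTransform μ g) :=
  VectorFourier.fourierIntegral_continuous Real.continuous_probChar continuous_dotProductBilin hg

theorem planeWaveTransform_add_smul (hf : Integrable f μ) (hg : Integrable g μ) (a : ℂ) :
    planeWaveTransform μ (f + a • g) = planeWaveTransform μ f + a • planeWaveTransform μ g := by
  rw [planeWaveTransform, VectorFourier.fourierIntegral_add Real.continuous_probChar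
    continuous_dotProductBilin hf (hg.smul a), VectorFourier.fourierIntegral_const_smul]
  rfl

theorem planeWaveTransform_congr_ae (h : f =ᵐ[μ] g) :
    planeWaveTransform μ f = planeWaveTransform μ g :=
  VectorFourier.fourierIntegral_congr_ae _ _ _ h

theorem norm_planeWaveTransform_indicator_le (hg : Integrable g μ) {E : Set (ι → ℝ)}
    (hE : MeasurableSet E) (x : ι → ℝ) :
    ‖planeWaveTransform μ (E.indicator g) x‖ ≤ ∫ p, ‖g p‖ ∂μ :=
  (VectorFourier.norm_fourierIntegral_le_integral_norm _ _ _ _ _).trans <|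
    integral_mono (hg.indicator hE).norm hg.norm fun _ ↦ norm_indicator_le_norm_self _ _

theorem tendsto_planeWaveTransform_indicator (hg : Integrable g μ) {E : ℕ → Set (ι → ℝ)}
    (hE : ∀ j, MeasurableSet (E j)) (h : ∀ p, ∀ᶠ j in atTop, p ∈ E j) (x : ι → ℝ) :
    Tendsto (fun j ↦ planeWaveTransform μ ((E j).indicator g) x) atTop
      (𝓝 (planeWaveTransform μ g x)) := by
  simp_rw [planeWaveTransform_apply]
  refine tendsto_integral_of_dominated_convergence (fun p ↦ ‖g p‖)
    (fun j ↦ (integrable_planeWave_smul (hg.indicator (hE j)) x).1) hg.norm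
    (fun j ↦ ae_of_all _ fun p ↦ ?_) (ae_of_all _ fun p ↦ ?_)
  · rw [norm_smul, norm_planeWave, one_mul]
    exact norm_indicator_le_norm_self _ _
  · refine tendsto_const_nhds.congr' ?_
    filter_upwards [h p] with j hj
    rw [indicator_of_mem hj]

end PlaneWaveTransform

section InnerPlaneWaveTransform

variable {ι F : Type*} [Fintype ι] [NormedAddCommGroup F] [InnerProductSpace ℂ F] [CompleteSpace F]
  {μ : Measure (ι → ℝ)} {f g : (ι → ℝ) → F}

theorem inner_planeWaveTransform (hg : Integrable g μ) (v : F) (x : ι → ℝ) :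
    ⟪v, planeWaveTransform μ g x⟫ = ∫ p, planeWave (-x) p * ⟪v, g p⟫ ∂μ := by
  rw [planeWaveTransform_apply, ← integral_inner (integrable_planeWave_smul hg x)]
  simp_rw [inner_smul_right]

theorem inner_planeWaveTransform_planeWaveTransform (hf : Integrable f μ) (hg : Integrable g μ)
    (x : ι → ℝ) :
    ⟪planeWaveTransform μ f x, planeWaveTransform μ g x⟫ =
      ∫ p₁, ∫ p₂, planeWave x (p₁ - p₂) * ⟪f p₁, g p₂⟫ ∂μ ∂μ := by
  rw [← inner_conj_symm, inner_planeWaveTransform hf, ← integral_conj]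
  refine integral_congr_ae (ae_of_all _ fun p₁ ↦ ?_)
  simp only [map_mul, inner_conj_symm]
  rw [inner_planeWaveTransform hg, ← integral_const_mul]
  refine integral_congr_ae (ae_of_all _ fun p₂ ↦ ?_)
  simp only [planeWave_sub_right, mul_assoc]

end InnerPlaneWaveTransform

section Density

theorem inv_mul_enorm_sq_planeWaveTransform {ι : Type*} [Fintype ι] {μ : Measure (ι → ℝ)}
    {U : (ι → ℝ) → Lp ℂ 2 μ ≃ₗᵢ[ℂ] Lp ℂ 2 μ} (hU : IsModulation μ U) {r : ℝ} (hr : 0 < r)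
    {w : (ι → ℝ) → ℂ} (hw_ne : ∀ p, w p ≠ 0) {h : ℕ → Lp ℂ 2 μ} {ξ : (ι → ℝ) → ell2}
    (hξ : ∀ᵐ p ∂μ, ∀ k, ξ p k = √r * conj (h k p) / w p) {φ ψ : Lp ℂ 2 μ}
    (hψ : ψ =ᵐ[μ] fun p ↦ w p * φ p) (hψξ : Integrable (fun p ↦ ψ p • ξ p) μ) (x : ι → ℝ) :
    (ENNReal.ofReal r)⁻¹ * ‖planeWaveTransform μ (fun p ↦ ψ p • ξ p) x‖ₑ ^ 2 =
      ∑' k, ‖⟪h k, U (-x) φ⟫‖ₑ ^ 2 := by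
  have inner_single (k : ℕ) (v : ell2) : ⟪(lp.single 2 k (1 : ℂ) : ell2), v⟫ = v k := by
    simp [lp.inner_single_left]
  have coord (k : ℕ) : planeWaveTransform μ (fun p ↦ ψ p • ξ p) x k = √r * ⟪h k, U (-x) φ⟫ := by
    rw [← inner_single, inner_planeWaveTransform hψξ, hU.inner_eq, ← integral_const_mul]
    refine integral_congr_ae ?_
    filter_upwards [hξ, hψ] with p hξp hψp
    rw [inner_smul_right, inner_single, hξp, hψp, RCLike.inner_apply]
    field [hw_ne p]
  rw [lp_enorm_sq_eq_tsum]
  simp_rw [coord, enorm_mul, mul_pow, enorm_ofReal_sqrt_sq hr.le]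
  rw [ENNReal.tsum_mul_left, ← mul_assoc,
    ENNReal.inv_mul_cancel (ENNReal.ofReal_pos.2 hr).ne' ENNReal.ofReal_ne_top, one_mul]

theorem integrable_smul_of_ae_norm_eq_one {α F : Type*} [MeasurableSpace α] {μ : Measure α}
    [NormedAddCommGroup F] [NormedSpace ℂ F] {ψ : α → ℂ} (hψ : Integrable ψ μ) {ξ : α → F}
    (hξ : AEStronglyMeasurable ξ μ) (hξ_norm : ∀ᵐ p ∂μ, ‖ξ p‖ = 1) :
    Integrable (fun p ↦ ψ p • ξ p) μ :=
  hψ.smul_of_top_left (memLp_top_of_bound hξ 1 (hξ_norm.mono fun _ h ↦ h.le))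

theorem exists_ae_eq_mul_of_indicator {α : Type*} [MeasurableSpace α] {μ : Measure α}
    {w : α → ℂ} (hw : Measurable w) {ψ : α → ℂ} (hψ : MemLp ψ 2 μ) {E : Set α}
    (hE : MeasurableSet E) {ε : ℝ} (hε : 0 < ε) (hwE : ∀ p ∈ E, ε ≤ ‖w p‖) :
    ∃ φ : Lp ℂ 2 μ, E.indicator ψ =ᵐ[μ] fun p ↦ w p * φ p := by
  have mem : MemLp (fun p ↦ E.indicator ψ p / w p) 2 μ := by
    refine .of_le_mul (c := ε⁻¹) hψ
      ((hψ.1.indicator hE).aemeasurable.div hw.aemeasurable).aestronglyMeasurable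
      (ae_of_all _ fun p ↦ ?_)
    by_cases hp : p ∈ E
    · rw [indicator_of_mem hp, norm_div, div_eq_inv_mul]
      gcongr
      exact hwE p hp
    · rw [indicator_of_notMem hp, zero_div, norm_zero]
      positivity
  refine ⟨mem.toLp _, ?_⟩
  filter_upwards [mem.coeFn_toLp] with p hp
  rw [hp]
  by_cases hpE : p ∈ E
  · have hwp : w p ≠ 0 := norm_pos_iff.1 (hε.trans_le (hwE p hpE))
    field
  · simp [hpE]

namespace POVM

variable {n : ℕ} {Λ : Set (Fin n → ℝ)}
  {U : (Fin n → ℝ) → Lp ℂ 2 (volume.restrict Λ) ≃ₗᵢ[ℂ] Lp ℂ 2 (volume.restrict Λ)}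
  {M : POVM (Fin n → ℝ) (Lp ℂ 2 (volume.restrict Λ))}

theorem exists_diagMeasure_eq_of_ae_eq_mul (hM : IsCovariantPos n Λ U M)
    (hU : IsModulation (volume.restrict Λ) U) (hΛ : MeasurableSet Λ) {w : (Fin n → ℝ) → ℂ}
    (hw : Measurable w) (hw_ne : ∀ p, w p ≠ 0) (hw_le : ∀ p, ‖w p‖ ≤ 1)
    (hw_mem : MemLp w 2 (volume.restrict Λ)) :
    ∃ ξ : (Fin n → ℝ) → ell2, StronglyMeasurable ξ ∧ (∀ᵐ p ∂(volume.restrict Λ), ‖ξ p‖ = 1) ∧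
      ∀ φ ψ : Lp ℂ 2 (volume.restrict Λ), ψ =ᵐ[volume.restrict Λ] (fun p ↦ w p * φ p) →
        M.diagMeasure ψ = volume.withDensity fun x ↦
          (ENNReal.ofReal ((2 * π) ^ n))⁻¹ *
            ‖planeWaveTransform (volume.restrict Λ) (fun p ↦ ψ p • ξ p) x‖ₑ ^ 2 := by
  obtain ⟨W, hW⟩ := exists_clm_ae_eq_mul
    (memLp_top_of_bound hw.aestronglyMeasurable 1 (ae_of_all (volume.restrict Λ) hw_le))
  obtain ⟨h, hh⟩ := exists_diagMeasure_eq_withDensity hM hU hΛ hw_mem hW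
  have h_sum := hU.ae_mul_tsum_enorm_sq_eq hΛ hw hW (h := h) fun φ ↦ by
    rw [← M.diagMeasure_univ, hh, withDensity_apply _ .univ, Measure.restrict_univ]
  rw [Fintype.card_fin] at h_sum
  obtain ⟨ξ, hξ, hξh⟩ := exists_ell2_of_mul_tsum_enorm_sq_eq (by positivity) hw hw_ne
    (fun k ↦ (Lp.stronglyMeasurable (h k)).measurable) h_sum
  have hξ_norm := hξh.mono fun _ hp ↦ hp.1
  refine ⟨ξ, hξ, hξ_norm, fun φ ψ hψ ↦ ?_⟩
  have hψ_int : Integrable ψ (volume.restrict Λ) :=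
    (hw_mem.integrable_mul (Lp.memLp φ)).congr hψ.symm
  rw [Lp.ext (hψ.trans (hW φ).symm), hh φ, ← Lp.ext (hψ.trans (hW φ).symm)]
  congr with x
  exact (inv_mul_enorm_sq_planeWaveTransform hU (by positivity) hw_ne (hξh.mono fun _ hp ↦ hp.2) hψ
    (integrable_smul_of_ae_norm_eq_one hψ_int hξ.aestronglyMeasurable hξ_norm) x).symm

end POVM

end Density

section Representation

namespace POVM

theorem inner_eq_mul_integral_inner {Ω H F : Type*} [MeasurableSpace Ω] [NormedAddCommGroup H]
    [InnerProductSpace ℂ H] [CompleteSpace H] [NormedAddCommGroup F] [InnerProductSpace ℂ F]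
    (M : POVM Ω H) {μ : Measure Ω} {f g : Ω → F} (hf : AEStronglyMeasurable f μ)
    (hg : AEStronglyMeasurable g μ) {r : ℝ} (hr : 0 < r) {φ ψ : H}
    (h : ∀ a : ℂ, M.diagMeasure (φ + a • ψ) =
      μ.withDensity fun x ↦ ENNReal.ofReal r * ‖f x + a • g x‖ₑ ^ 2)
    {B : Set Ω} (hB : MeasurableSet B) :
    ⟪φ, M.toFun B ψ⟫ = r * ∫ x in B, ⟪f x, g x⟫ ∂μ := by
  have diag_eq (a : ℂ) {A : Set Ω} (hA : MeasurableSet A) : M.diagMeasure (φ + a • ψ) A =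
      ENNReal.ofReal r * eLpNorm (f + a • g) 2 (μ.restrict A) ^ 2 := by
    rw [h, withDensity_apply _ hA, lintegral_const_mul' _ _ ENNReal.ofReal_ne_top, eLpNorm_two_sq]
    rfl
  have mem (a : ℂ) : MemLp (f + a • g) 2 (μ.restrict B) := by
    refine ⟨(hf.add (hg.const_smul a)).restrict, lt_top_iff_ne_top.2 fun htop ↦ ?_⟩
    refine measure_ne_top (M.diagMeasure (φ + a • ψ)) B ?_
    rw [diag_eq a hB, htop, ENNReal.top_pow two_ne_zero,
      ENNReal.mul_top (ENNReal.ofReal_pos.2 hr).ne']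
  have hf₂ : MemLp f 2 (μ.restrict B) := by simpa using mem 0
  have hg₂ : MemLp g 2 (μ.restrict B) := by simpa using (mem 1).sub hf₂
  obtain ⟨S, -, hS⟩ := exists_inner_eq_inner_of_isPositive (M.isPositive B hB)
  have norm_sq (a : ℂ) :
      ‖S φ + a • S ψ‖ ^ 2 = r * ‖hf₂.toLp f + a • hg₂.toLp g‖ ^ 2 := by
    rw [← ENNReal.ofReal_eq_ofReal_iff (by positivity) (by positivity),
      ENNReal.ofReal_mul hr.le, ENNReal.ofReal_pow (norm_nonneg _),
      ENNReal.ofReal_pow (norm_nonneg _), ofReal_norm, ofReal_norm, ← MemLp.toLp_const_smul,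
      ← MemLp.toLp_add, Lp.enorm_toLp, ← diag_eq a hB, M.diagMeasure_apply _ hB, hS,
      ofReal_re_inner_self, map_add, map_smul]
  rw [hS, inner_eq_mul_inner_of_norm_add_smul_sq norm_sq, L2.inner_def]
  congr 1
  refine integral_congr_ae ?_
  filter_upwards [hf₂.coeFn_toLp, hg₂.coeFn_toLp] with x hfx hgx
  rw [hfx, hgx]

theorem diagMeasure_toLp_eq_of_forall_indicator {ι F : Type*} [Fintype ι] [NormedAddCommGroup F]
    [NormedSpace ℂ F] {μ : Measure (ι → ℝ)} (M : POVM (ι → ℝ) (Lp ℂ 2 μ)) {ψ : (ι → ℝ) → ℂ}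
    (hψ : MemLp ψ 2 μ) {g : (ι → ℝ) → F} (hg : Integrable g μ) {E : ℕ → Set (ι → ℝ)}
    (hE : ∀ j, MeasurableSet (E j)) (hE_mem : ∀ p, ∀ᶠ j in atTop, p ∈ E j) {r : ℝ≥0∞} (hr : r ≠ ∞)
    (h : ∀ j, M.diagMeasure ((hψ.indicator (hE j)).toLp ((E j).indicator ψ)) =
      volume.withDensity fun x ↦ r * ‖planeWaveTransform μ ((E j).indicator g) x‖ₑ ^ 2) :
    M.diagMeasure (hψ.toLp ψ) =
      volume.withDensity fun x ↦ r * ‖planeWaveTransform μ g x‖ₑ ^ 2 := by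
  refine eq_withDensity_of_tendsto (C := r * ENNReal.ofReal (∫ p, ‖g p‖ ∂μ) ^ 2)
    (f := fun j x ↦ r * ‖planeWaveTransform μ ((E j).indicator g) x‖ₑ ^ 2)
    (ENNReal.mul_ne_top hr (ENNReal.pow_ne_top ENNReal.ofReal_ne_top)) (fun j ↦ ?_)
    (fun j x ↦ ?_) (fun x ↦ ?_) fun B hB ↦ ?_
  · exact ((continuous_planeWaveTransform (hg.indicator (hE j))).enorm.measurable.pow_const
      2).const_mul r
  · gcongr
    rw [← ofReal_norm]
    exact ENNReal.ofReal_le_ofReal (norm_planeWaveTransform_indicator_le hg (hE j) x)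
  · exact ENNReal.Tendsto.const_mul (((ENNReal.continuous_pow 2).tendsto _).comp
      (tendsto_planeWaveTransform_indicator hg hE hE_mem x).enorm) (.inr hr)
  · refine (M.tendsto_diagMeasure_apply
      (tendsto_toLp_indicator ENNReal.ofNat_ne_top hψ hE hE_mem) hB).congr fun j ↦ ?_
    rw [h, withDensity_apply _ hB]

variable {n : ℕ} {Λ : Set (Fin n → ℝ)}
  {U : (Fin n → ℝ) → Lp ℂ 2 (volume.restrict Λ) ≃ₗᵢ[ℂ] Lp ℂ 2 (volume.restrict Λ)}
  {M : POVM (Fin n → ℝ) (Lp ℂ 2 (volume.restrict Λ))}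

theorem exists_diagMeasure_toLp_eq_withDensity_planeWaveTransform (hM : IsCovariantPos n Λ U M)
    (hU : IsModulation (volume.restrict Λ) U) (hΛ : MeasurableSet Λ) :
    ∃ ξ : (Fin n → ℝ) → ell2, StronglyMeasurable ξ ∧ (∀ᵐ p ∂(volume.restrict Λ), ‖ξ p‖ = 1) ∧
      ∀ (ψ : (Fin n → ℝ) → ℂ) (hψ : MemLp ψ 2 (volume.restrict Λ)),
        Integrable ψ (volume.restrict Λ) →
        M.diagMeasure (hψ.toLp ψ) = volume.withDensity fun x ↦
          ENNReal.ofReal ((2 * π) ^ n)⁻¹ *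
            ‖planeWaveTransform (volume.restrict Λ) (fun p ↦ ψ p • ξ p) x‖ₑ ^ 2 := by
  rw [ENNReal.ofReal_inv_of_pos (by positivity)]
  obtain ⟨w, hw, hw_ne, hw_le, hw_mem⟩ := exists_memLp_two_ne_zero (volume.restrict Λ)
  obtain ⟨ξ, hξ, hξ_norm, diag_eq⟩ :=
    exists_diagMeasure_eq_of_ae_eq_mul hM hU hΛ hw hw_ne hw_le hw_mem
  refine ⟨ξ, hξ, hξ_norm, fun ψ hψ hψ_int ↦ ?_⟩
  let E (j : ℕ) : Set (Fin n → ℝ) := {p | 1 / ((j : ℝ) + 1) ≤ ‖w p‖}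
  have hE (j : ℕ) : MeasurableSet (E j) := measurableSet_le measurable_const hw.norm
  have hE_mem (p) : ∀ᶠ j in atTop, p ∈ E j :=
    (tendsto_one_div_add_atTop_nhds_zero_nat (𝕜 := ℝ)).eventually_le_const
      (norm_pos_iff.2 (hw_ne p))
  refine M.diagMeasure_toLp_eq_of_forall_indicator hψ
    (integrable_smul_of_ae_norm_eq_one hψ_int hξ.aestronglyMeasurable hξ_norm) hE hE_mem
    (ENNReal.inv_ne_top.2 (ENNReal.ofReal_pos.2 (by positivity)).ne') fun j ↦ ?_
  have coe_toLp := (hψ.indicator (hE j)).coeFn_toLp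
  obtain ⟨φ, hφ⟩ := exists_ae_eq_mul_of_indicator hw hψ (hE j) Nat.one_div_pos_of_nat fun _ hp ↦ hp
  rw [diag_eq φ _ (coe_toLp.trans hφ), planeWaveTransform_congr_ae]
  filter_upwards [coe_toLp] with p hp
  rw [hp, indicator_smul_apply_left]

theorem exists_inner_eq_mul_integral_inner_planeWaveTransform (hM : IsCovariantPos n Λ U M)
    (hU : IsModulation (volume.restrict Λ) U) (hΛ : MeasurableSet Λ) :
    ∃ ξ : (Fin n → ℝ) → ell2, StronglyMeasurable ξ ∧ (∀ᵐ p ∂(volume.restrict Λ), ‖ξ p‖ = 1) ∧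
      ∀ {φ ψ : (Fin n → ℝ) → ℂ}, Integrable φ (volume.restrict Λ) →
        Integrable ψ (volume.restrict Λ) → ∀ (hφ : MemLp φ 2 (volume.restrict Λ))
        (hψ : MemLp ψ 2 (volume.restrict Λ)) {B : Set (Fin n → ℝ)}, MeasurableSet B →
        ⟪hφ.toLp φ, M.toFun B (hψ.toLp ψ)⟫ = (((2 * π) ^ n)⁻¹ : ℝ) * ∫ x in B,
          ⟪planeWaveTransform (volume.restrict Λ) (fun p ↦ φ p • ξ p) x,
            planeWaveTransform (volume.restrict Λ) (fun p ↦ ψ p • ξ p) x⟫ := by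
  obtain ⟨ξ, hξ, hξ_norm, diag_eq⟩ :=
    exists_diagMeasure_toLp_eq_withDensity_planeWaveTransform hM hU hΛ
  refine ⟨ξ, hξ, hξ_norm, fun {φ ψ} hφ_int hψ_int hφ hψ B hB ↦ ?_⟩
  have hφξ := integrable_smul_of_ae_norm_eq_one hφ_int hξ.aestronglyMeasurable hξ_norm
  have hψξ := integrable_smul_of_ae_norm_eq_one hψ_int hξ.aestronglyMeasurable hξ_norm
  refine M.inner_eq_mul_integral_inner (continuous_planeWaveTransform hφξ).aestronglyMeasurable
    (continuous_planeWaveTransform hψξ).aestronglyMeasurable (by positivity) (fun a ↦ ?_) hB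
  have smul_ξ : (fun p ↦ (φ + a • ψ) p • ξ p) = (fun p ↦ φ p • ξ p) + a • fun p ↦ ψ p • ξ p := by
    ext1 p
    simp [add_smul, mul_smul]
  rw [← MemLp.toLp_const_smul, ← MemLp.toLp_add, diag_eq _ _ (hφ_int.add (hψ_int.smul a)), smul_ξ,
    planeWaveTransform_add_smul hφξ hψξ]
  rfl

end POVM

end Representation

theorem stmt1 (n : ℕ) (hn : 1 ≤ n) (Λ : Set (Fin n → ℝ)) (hΛmeas : MeasurableSet Λ)
    (hΛpos : 0 < volume Λ)
    (U : (Fin n → ℝ) →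
      (Lp ℂ 2 (volume.restrict Λ) ≃ₗᵢ[ℂ] Lp ℂ 2 (volume.restrict Λ)))
    (hU : ∀ q : Fin n → ℝ, ∀ φ : Lp ℂ 2 (volume.restrict Λ),
      (U q φ : (Fin n → ℝ) → ℂ) =ᵐ[volume.restrict Λ]
        fun p => Complex.exp (Complex.I * (∑ k, q k * p k)) * φ p)
    (M : POVM (Fin n → ℝ) (Lp ℂ 2 (volume.restrict Λ)))
    (hM : IsCovariantPos n Λ U M) :
    ∃ ξ : (Fin n → ℝ) → ell2,
      (∀ e : ell2, Measurable fun p => ⟪e, ξ p⟫) ∧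
      (∀ᵐ p ∂(volume.restrict Λ), ‖ξ p‖ = 1) ∧
      ∀ φ ψ : (Fin n → ℝ) → ℂ,
        Integrable φ (volume.restrict Λ) → Integrable ψ (volume.restrict Λ) →
        ∀ (hφ : MemLp φ 2 (volume.restrict Λ)) (hψ : MemLp ψ 2 (volume.restrict Λ)),
        ∀ B : Set (Fin n → ℝ), MeasurableSet B →
          ⟪hφ.toLp φ, M.toFun B (hψ.toLp ψ)⟫
            = (((2 * Real.pi) ^ n : ℝ) : ℂ)⁻¹ *
              ∫ x in B, (∫ p₁, (∫ p₂,
                  Complex.exp (Complex.I * (∑ k, x k * (p₁ k - p₂ k))) *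
                    ⟪ξ p₁, ξ p₂⟫ * conj (φ p₁) * ψ p₂
                  ∂(volume.restrict Λ)) ∂(volume.restrict Λ)) := by
  have hU' : IsModulation (volume.restrict Λ) U := fun q φ ↦ by
    filter_upwards [hU q φ] with p hp
    simp [hp, planeWave, dotProduct]
  obtain ⟨ξ, hξ, hξ_norm, inner_eq⟩ :=
    POVM.exists_inner_eq_mul_integral_inner_planeWaveTransform hM hU' hΛmeas
  refine ⟨ξ, fun e ↦ (stronglyMeasurable_const.inner hξ).measurable, hξ_norm, ?_⟩
  intro φ ψ hφ_int hψ_int hφ hψ B hB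
  have integrable_smul {θ : (Fin n → ℝ) → ℂ} (hθ : Integrable θ (volume.restrict Λ)) :=
    integrable_smul_of_ae_norm_eq_one hθ hξ.aestronglyMeasurable hξ_norm
  rw [inner_eq hφ_int hψ_int hφ hψ hB, Complex.ofReal_inv]
  congr! with x
  rw [inner_planeWaveTransform_planeWaveTransform (integrable_smul hφ_int) (integrable_smul hψ_int)]
  refine integral_congr_ae (ae_of_all _ fun p₁ ↦ integral_congr_ae (ae_of_all _ fun p₂ ↦ ?_))
  simp only [inner_smul_left, inner_smul_right, planeWave, dotProduct, Pi.sub_apply]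
  ring
end
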